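/- arXiv:2104.01968 — 5 statements merged into one kernel-verified Lean document; each statement's English description precedes it below -/
import Mathlib

section
/- Let (D1, D2, x) be an admissible triple and let B be a quaternion algebra over ℚ. Then B contains elements w1, w2 with w_i ∉ ℚ·1, w1² = D1·1, w2² = D2·1 and trd(w1·w2) = 2x (that is, B admits a pair of x-linked embeddings of O_{D1} and O_{D2}) if and only if B is isomorphic as a ℚ-algebra to ℍ[ℚ, D1, x² − D1·D2]. In particular, up to isomorphism there is exactly one quaternion algebra over ℚ admitting x-linked embeddings of O_{D1} and O_{D2}. -/
/-!
Linked elements amount to a quaternion basis. If `w1² = D1`, `w2² = D2` and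
`w1 w2 + w2 w1 = 2x`, then `j = w1 w2 - x` anticommutes with `w1` and `j² = x² - D1 D2`, so
`w1` and `j` define an algebra map `ℍ[ℚ, D1, x² - D1 D2] → B`. As `D1` and `x² - D1 D2` are
nonzero, the source is simple, so the map is injective (`lift_injective`), and both sides have
dimension four. Conversely, in `ℍ[ℚ, D1, x² - D1 D2]` the elements `w1 = i` and
`w2 = (x i + k) / D1` are linked: the second is `i⁻¹ (x + j)`.
-/

open Quaternion

/-- `(D1, D2, x)` is an admissible triple: `D1, D2` are positive discriminants,
`x ≡ D1·D2 (mod 2)` and `x² ≠ D1·D2`. -/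
def Admissible (D1 D2 x : ℤ) : Prop :=
  0 < D1 ∧ 0 < D2 ∧ (D1 % 4 = 0 ∨ D1 % 4 = 1) ∧ (D2 % 4 = 0 ∨ D2 % 4 = 1) ∧
    x % 2 = (D1 * D2) % 2 ∧ x ^ 2 ≠ D1 * D2

/-- `B` is a quaternion algebra over `F`: an `F`-algebra isomorphic to some `ℍ[F, a, b]`. -/
def IsQuaternionAlgebra (F B : Type*) [Field F] [Ring B] [Algebra F B] : Prop :=
  ∃ a b : F, a ≠ 0 ∧ b ≠ 0 ∧ Nonempty (B ≃ₐ[F] ℍ[F, a, b])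

/-- Averaging over conjugation by `1, i, j, k` projects a quaternion onto its real part, so the
kernel of `f` contains the real part of each of its elements. -/
lemma re_eq_zero_of_map_eq_zero {F B : Type*} [Field F] [CharZero F] [Ring B] [Nontrivial B]
    [Algebra F B] {a b : F} (ha : a ≠ 0) (hb : b ≠ 0) (f : ℍ[F, a, b] →ₐ[F] B)
    (r : ℍ[F, a, b]) (hr : f r = 0) : r.re = 0 := by
  let i : ℍ[F, a, b] := ⟨0, 1, 0, 0⟩
  let j : ℍ[F, a, b] := ⟨0, 0, 1, 0⟩
  let t := r + a⁻¹ • (i * r * i)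
  have key : t + b⁻¹ • (j * t * j) = algebraMap F _ (4 * r.re) := by
    ext <;> simp [t, i, j, QuaternionAlgebra.algebraMap_eq] <;> field_simp <;> ring
  have h0 : f (t + b⁻¹ • (j * t * j)) = 0 := by simp [t, hr]
  rw [key, AlgHom.commutes] at h0
  have h1 : (4 * r.re : F) = 0 := (algebraMap F B).injective (by rw [h0, map_zero])
  simpa using h1

lemma lift_injective {F B : Type*} [Field F] [CharZero F] [Ring B] [Nontrivial B]
    [Algebra F B] {a b : F} (ha : a ≠ 0) (hb : b ≠ 0) (f : ℍ[F, a, b] →ₐ[F] B) :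
    Function.Injective f := by
  rw [injective_iff_map_eq_zero]
  intro r hr
  -- The other coordinates of `r` are, up to nonzero factors, real parts of multiples of `r`.
  have h (s : ℍ[F, a, b]) : (s * r).re = 0 :=
    re_eq_zero_of_map_eq_zero ha hb f _ (by rw [map_mul, hr, mul_zero])
  have h1 := h 1
  have hi := h ⟨0, 1, 0, 0⟩
  have hj := h ⟨0, 0, 1, 0⟩
  have hk := h ⟨0, 0, 0, 1⟩
  simp [ha, hb] at h1 hi hj hk
  ext <;> simp [*]

/-- Elements `w1, w2` with the linking relations give the quaternion basis `w1, w1 w2 - x`. -/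
def linkedBasis {F B : Type*} [Field F] [Ring B] [Algebra F B] (d e x : F) (w1 w2 : B)
    (h1 : w1 ^ 2 = algebraMap F B d) (h2 : w2 ^ 2 = algebraMap F B e)
    (h : w1 * w2 + w2 * w1 = algebraMap F B (2 * x)) :
    QuaternionAlgebra.Basis B d 0 (x ^ 2 - d * e) where
  i := w1
  j := w1 * w2 - algebraMap F B x
  k := w1 * (w1 * w2 - algebraMap F B x)
  i_mul_i := by rw [← sq, h1, zero_smul, add_zero, Algebra.algebraMap_eq_smul_one]
  j_mul_j := by
    have h' : w2 * w1 = algebraMap F B (2 * x) - w1 * w2 := eq_sub_of_add_eq' h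
    have hc := Algebra.commutes x (w1 * w2)
    have hc1 := Algebra.commutes (2 * x) w1
    have hw : w1 * w2 * (w1 * w2) = algebraMap F B (2 * x) * (w1 * w2)
        - algebraMap F B d * algebraMap F B e := by
      calc w1 * w2 * (w1 * w2) = w1 * (w2 * w1) * w2 := by noncomm_ring
        _ = w1 * algebraMap F B (2 * x) * w2 - w1 ^ 2 * w2 ^ 2 := by rw [h']; noncomm_ring
        _ = _ := by rw [← hc1, h1, h2, mul_assoc]
    rw [← Algebra.algebraMap_eq_smul_one, sub_mul, mul_sub, mul_sub, hw, ← hc]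
    simp only [map_sub, map_mul, map_pow, map_ofNat]
    noncomm_ring
  i_mul_j := rfl
  j_mul_i := by
    have h' : w2 * w1 = algebraMap F B (2 * x) - w1 * w2 := eq_sub_of_add_eq' h
    rw [zero_smul, sub_mul, mul_assoc, h', Algebra.commutes x w1, map_mul, map_ofNat]
    noncomm_ring

/-- Let `(D1, D2, x)` be an admissible triple and `B` a quaternion algebra over `ℚ`. Then `B`
contains elements `w1, w2` with `wᵢ ∉ ℚ·1`, `w1² = D1·1`, `w2² = D2·1` and `trd(w1·w2) = 2x`
(i.e. `w1·w2 + w2·w1 = 2x·1`; that is, `B` admits a pair of `x`-linked embeddings of `O_{D1}`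
and `O_{D2}`) if and only if `B` is isomorphic as a `ℚ`-algebra to `ℍ[ℚ, D1, x² − D1·D2]`.
In particular, up to isomorphism there is exactly one quaternion algebra over `ℚ` admitting
`x`-linked embeddings of `O_{D1}` and `O_{D2}`. -/
theorem stmt10 {B : Type*} [Ring B] [Algebra ℚ B]
    (hB : IsQuaternionAlgebra ℚ B)
    (D1 D2 x : ℤ) (hadm : Admissible D1 D2 x) :
    (∃ w1 w2 : B,
        w1 ∉ Set.range (algebraMap ℚ B) ∧ w2 ∉ Set.range (algebraMap ℚ B) ∧
        w1 ^ 2 = algebraMap ℚ B ((D1 : ℤ) : ℚ) ∧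
        w2 ^ 2 = algebraMap ℚ B ((D2 : ℤ) : ℚ) ∧
        w1 * w2 + w2 * w1 = algebraMap ℚ B ((2 * x : ℤ) : ℚ)) ↔
      Nonempty (B ≃ₐ[ℚ] ℍ[ℚ, ((D1 : ℤ) : ℚ), ((x ^ 2 - D1 * D2 : ℤ) : ℚ)]) := by
  obtain ⟨hD1, -, -, -, -, hne⟩ := hadm
  have hd : ((D1 : ℤ) : ℚ) ≠ 0 := by exact_mod_cast hD1.ne'
  have hN : ((x ^ 2 - D1 * D2 : ℤ) : ℚ) ≠ 0 := by exact_mod_cast sub_ne_zero.mpr hne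
  constructor
  · rintro ⟨w1, w2, -, -, h1, h2, h⟩
    obtain ⟨a, b, -, -, ⟨e⟩⟩ := hB
    have : Nontrivial B := e.toEquiv.nontrivial
    have hdim : Module.finrank ℚ B = 4 :=
      e.toLinearEquiv.finrank_eq.trans (QuaternionAlgebra.finrank_eq_four _ _ _)
    have : FiniteDimensional ℚ B := Module.finite_of_finrank_pos (by omega)
    have hcast : ((x ^ 2 - D1 * D2 : ℤ) : ℚ) = (x : ℚ) ^ 2 - D1 * D2 := by push_cast; rfl
    rw [hcast] at hN ⊢
    let f := (linkedBasis (D1 : ℚ) D2 x w1 w2 h1 h2 (by rw [h]; push_cast; rfl)).liftHom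
    have hinj : Function.Injective f := lift_injective hd hN f
    have hsurj : Function.Surjective f :=
      (LinearMap.injective_iff_surjective_of_finrank_eq_finrank (f := f.toLinearMap)
        ((QuaternionAlgebra.finrank_eq_four _ _ _).trans hdim.symm)).mp hinj
    exact ⟨(AlgEquiv.ofBijective f ⟨hinj, hsurj⟩).symm⟩
  · rintro ⟨e⟩
    have hrange (w : ℍ[ℚ, ((D1 : ℤ) : ℚ), ((x ^ 2 - D1 * D2 : ℤ) : ℚ)])
        (hw : w.imI ≠ 0 ∨ w.imK ≠ 0) : e.symm w ∉ Set.range (algebraMap ℚ B) := by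
      rintro ⟨q, hq⟩
      rw [← e.symm.commutes] at hq
      have := e.symm.injective hq
      subst this
      simp [QuaternionAlgebra.algebraMap_eq] at hw
    refine ⟨e.symm ⟨0, 1, 0, 0⟩, e.symm ⟨0, x / D1, 0, 1 / D1⟩, hrange _ (by simp),
      hrange _ (Or.inr (by simpa using hd)), ?_, ?_, ?_⟩
    · rw [← map_pow, ← e.symm.commutes]
      congr 1
      ext <;> simp [sq, QuaternionAlgebra.algebraMap_eq]
    · rw [← map_pow, ← e.symm.commutes]
      congr 1
      ext <;> simp [sq, QuaternionAlgebra.algebraMap_eq] <;> field_simp <;> ring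
    · rw [← map_mul, ← map_mul, ← map_add, ← e.symm.commutes]
      congr 1
      ext <;> simp [QuaternionAlgebra.algebraMap_eq] <;> field_simp <;> ring
end

section
/- Let (D1, D2, x) be an admissible triple, B an indefinite quaternion algebra over ℚ, and φ1, φ2 x-linked embeddings of O_{D1}, O_{D2} into B. Let p be a prime with p² ∣ D1 and D1/p² ≡ 0 or 1 (mod 4), and let φ1′ be the embedding of O_{D1/p²} into B determined by φ1′(√(D1/p²)) = φ1(√D1)/p. Then (φ1′, φ2) is an (x/p)-linked pair of embeddings — that is, p divides x and x/p ≡ (D1/p²)·D2 (mod 2) — if and only if p divides (D1·D2 − x²)/4. -/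
/-!
Write `D1 = p²E`. The equivalence is one of congruences between integers. Admissibility gives
`4 ∣ D1·D2 − x²`, so the division by `4` is exact.

If `p` is odd, then `p ∣ (D1·D2 − x²)/4` is equivalent to `p ∣ D1·D2 − x²`, hence to `p ∣ x²` and to
`p ∣ x`; writing `x = p·y`, the parity of `y` is that of `x`, which is that of `p²·E·D2`, hence that
of `E·D2`. If `p = 2`, then `x ≡ 4·E·D2 (mod 2)` is automatically even, and for `x = 2y` one has
`(D1·D2 − x²)/4 = E·D2 − y²`, which is even exactly when `y ≡ E·D2 (mod 2)`.
-/

/-- With `m = D1 * D2`, this makes the quotient `(D1 * D2 - x ^ 2) / 4` an exact one. -/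
lemma four_dvd_sub_sq {m x : ℤ} (hm : m % 4 = 0 ∨ m % 4 = 1) (hx : x % 2 = m % 2) :
    (4 : ℤ) ∣ m - x ^ 2 := by
  obtain ⟨y, rfl | rfl⟩ := Int.even_or_odd' x
  · have h : (2 * y) ^ 2 = 4 * y ^ 2 := by ring
    omega
  · have h : (2 * y + 1) ^ 2 = 4 * (y ^ 2 + y) + 1 := by ring
    omega

lemma mul_disc_mod_four {a b : ℤ} (ha : a % 4 = 0 ∨ a % 4 = 1) (hb : b % 4 = 0 ∨ b % 4 = 1) :
    (a * b) % 4 = 0 ∨ (a * b) % 4 = 1 := by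
  rcases ha with ha | ha <;> rcases hb with hb | hb <;> simp [Int.mul_emod, ha, hb]

/-- The case `p = 2`, where `n` stands for `(D1 / 4) * D2`. -/
lemma two_case {n x : ℤ} (hx : x % 2 = (4 * n) % 2) :
    ((2 : ℤ) ∣ x ∧ (x / 2) % 2 = n % 2) ↔ (2 : ℤ) ∣ (4 * n - x ^ 2) / 4 := by
  obtain ⟨y, rfl⟩ : (2 : ℤ) ∣ x := by omega
  have h : (4 * n - (2 * y) ^ 2) / 4 = n - y ^ 2 := by
    rw [show 4 * n - (2 * y) ^ 2 = 4 * (n - y ^ 2) by ring]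
    exact Int.mul_ediv_cancel_left _ (by norm_num)
  have hy : y ^ 2 % 2 = y % 2 := by
    rcases Int.emod_two_eq_zero_or_one y with hy | hy <;> simp [pow_two, Int.mul_emod, hy]
  rw [h]
  omega

/-- The case of an odd prime `p`, where `n` stands for `(D1 / p ^ 2) * D2`. -/
lemma odd_case {p n x : ℤ} (hp : Prime p) (hodd : p % 2 = 1) (hx : x % 2 = (p ^ 2 * n) % 2)
    (h4 : (4 : ℤ) ∣ p ^ 2 * n - x ^ 2) :
    (p ∣ x ∧ (x / p) % 2 = n % 2) ↔ p ∣ (p ^ 2 * n - x ^ 2) / 4 := by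
  have hcop : IsCoprime p 4 := by
    have h2 : IsCoprime p 2 := ⟨1, -(p / 2), by omega⟩
    simpa using h2.pow_right (n := 2)
  have hdvd : p ∣ (p ^ 2 * n - x ^ 2) / 4 ↔ p ∣ x := by
    obtain ⟨m, hm⟩ := h4
    rw [hm, Int.mul_ediv_cancel_left _ (by norm_num)]
    have hpn : p ∣ p ^ 2 * n := ⟨p * n, by ring⟩
    calc p ∣ m ↔ p ∣ 4 * m := ⟨fun h => h.mul_left 4, hcop.dvd_of_dvd_mul_left⟩
      _ ↔ p ∣ x ^ 2 := by rw [← hm, dvd_sub_right hpn]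
      _ ↔ p ∣ x := hp.dvd_pow_iff_dvd two_ne_zero
  rw [hdvd, and_iff_left_iff_imp]
  rintro ⟨y, rfl⟩
  rw [Int.mul_ediv_cancel_left _ hp.ne_zero]
  simpa [Int.mul_emod, pow_two, hodd] using hx


open Quaternion
open scoped TensorProduct

/-- Let `(D1, D2, x)` be an admissible triple, `B` an indefinite quaternion algebra over `ℚ`,
and `φ1, φ2` `x`-linked embeddings of `O_{D1}, O_{D2}` into `B` (given by `wᵢ = φᵢ(√Dᵢ)` with
`wᵢ ∉ ℚ·1`, `wᵢ² = Dᵢ·1` and `w1·w2 + w2·w1 = 2x·1`). Let `p` be a prime with `p² ∣ D1` and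
`D1/p² ≡ 0` or `1 (mod 4)`, and let `φ1′` be the embedding of `O_{D1/p²}` into `B` determined
by `φ1′(√(D1/p²)) = φ1(√D1)/p`. Then `(φ1′, φ2)` is an `(x/p)`-linked pair of embeddings —
that is, `p` divides `x` and `x/p ≡ (D1/p²)·D2 (mod 2)` — if and only if `p` divides
`(D1·D2 − x²)/4`. -/
theorem stmt11 {B : Type*} [Ring B] [Algebra ℚ B]
    (hB : IsQuaternionAlgebra ℚ B)
    (hindef : ¬ (∀ z : ℝ ⊗[ℚ] B, z ≠ 0 → IsUnit z))
    (D1 D2 x : ℤ) (hadm : Admissible D1 D2 x)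
    (w1 w2 : B)
    (hw1ns : w1 ∉ Set.range (algebraMap ℚ B))
    (hw2ns : w2 ∉ Set.range (algebraMap ℚ B))
    (hw1sq : w1 ^ 2 = algebraMap ℚ B ((D1 : ℤ) : ℚ))
    (hw2sq : w2 ^ 2 = algebraMap ℚ B ((D2 : ℤ) : ℚ))
    (hlink : w1 * w2 + w2 * w1 = algebraMap ℚ B ((2 * x : ℤ) : ℚ))
    (p : ℕ) (hp : p.Prime) (hpD1 : (p : ℤ) ^ 2 ∣ D1)
    (hD1p : (D1 / (p : ℤ) ^ 2) % 4 = 0 ∨ (D1 / (p : ℤ) ^ 2) % 4 = 1)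
    (w1' : B) (hw1' : (p : ℚ) • w1' = w1) :
    (((p : ℤ) ∣ x) ∧ (x / (p : ℤ)) % 2 = ((D1 / (p : ℤ) ^ 2) * D2) % 2) ↔
      (p : ℤ) ∣ (D1 * D2 - x ^ 2) / 4 := by
  obtain ⟨-, -, hD1, hD2, hx, -⟩ := hadm
  have h4 := four_dvd_sub_sq (mul_disc_mod_four hD1 hD2) hx
  have hpZ : Prime (p : ℤ) := Nat.prime_iff_prime_int.mp hp
  obtain ⟨E, rfl⟩ := hpD1
  rw [mul_assoc] at hx h4 ⊢
  rw [Int.mul_ediv_cancel_left _ (pow_ne_zero 2 hpZ.ne_zero)]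
  rcases hp.eq_two_or_odd with rfl | hodd
  · norm_num at hx ⊢
    exact two_case (by omega)
  · exact odd_case hpZ (by omega) hx h4
end

section
/- Let (D1, D2, x) be an admissible triple and p a prime with p ∤ gcd(D1, D2, D1·D2 − x²) (p is nice). Let B be a quaternion algebra over ℚ_p containing elements w1, w2 ∉ ℚ_p·1 with w_i² = D_i·1 and trd(w1·w2) = 2x, set v_i = (p_{D_i}·1 + w_i)/2, and let O be the ℤ_p-submodule of B spanned by {1, v1, v2, v1·v2}. Then O is an order of B, and: (i) if p ∤ (D1·D2 − x²)/4, then O is a maximal order; otherwise, choosing j ∈ {1,2} with p ∤ D_j (such j exists), (ii) if (D_j/p) = −1 then O is contained in exactly one maximal order of B, and (iii) if (D_j/p) = 1 then O is an Eichler order of B. -/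
/-!
Write `Dᵢ = 4dᵢ + eᵢ²` with `eᵢ ∈ {0, 1}`, `x = 2m + e₁e₂` and `N = (D₁D₂ - x²)/4`. The elements
`v₁, v₂` satisfy `vᵢ² = eᵢvᵢ + dᵢ` and `v₂v₁ = -v₁v₂ + e₁v₂ + e₂v₁ + m`, so the `ℤ_p`-span `O` of
`1, v₁, v₂, v₁v₂` is closed under multiplication. Since `D₁ ≠ 0` and `N ≠ 0`, the algebra `B` is
identified (`exists_model`) with the nondegenerate quaternion algebra generated by `i = v₁` and by
the component `j` of `v₂` orthogonal to `ℚ_p(v₁)`, for which `j² = N/D₁`.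

All three parts rest on one fact (`rtrace_rnorm_integral`): elements of an order have integral
reduced trace and norm.

* If `p ∤ N`, the reduced discriminant of `O` is a unit, so pairing an element of a larger order
  with `O` under the trace form shows that it already lies in `O` (`mem_zpSpan_of_unit_disc`).
* If `p ∤ D₁`, then `v₂` may be replaced by `j`, that is `O = R + Rj` with `R = ℤ_p[i]`.
  - If `D₁` is a nonsquare mod `p`, then `R` is the unramified quadratic ring. Choosing `σ` with
    `j² = wσ²` and `w` of valuation `0` or `1`, every order containing `i` lies in `R + R(j/σ)`,
    which is therefore the only maximal order above `O` (`existsUnique_of_inert`).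
  - If `D₁` is a square mod `p`, Hensel's lemma splits `R ≅ ℤ_p × ℤ_p` and `B ≅ M₂(ℚ_p)`, where `O`
    is the intersection of two conjugates of `M₂(ℤ_p)` (`eichler_of_split`).

Exchanging `v₁` and `v₂` does not change `O`, which covers the case `p ∤ D₂`.
-/

open Quaternion
open scoped Classical

/-- The Kronecker symbol `(D/p)` at a prime `p`: for odd `p` it is the Legendre symbol
(`0` if `p ∣ D`, `1` if `D` is a nonzero square mod `p`, `-1` otherwise); for `p = 2` it is
`0` if `D` is even, `1` if `D ≡ ±1 (mod 8)` and `-1` if `D ≡ ±3 (mod 8)`. -/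
noncomputable def kron (D : ℤ) (p : ℕ) : ℤ :=
  if p = 2 then
    if D % 2 = 0 then 0 else if D % 8 = 1 ∨ D % 8 = 7 then 1 else -1
  else if (p : ℤ) ∣ D then 0
  else if ∃ y : ℤ, (p : ℤ) ∣ (y ^ 2 - D) then 1 else -1

/-- The `ℤ_p`-submodule of `B` spanned by the entries of a list `l`. -/
def ZpSpan (p : ℕ) [Fact p.Prime] {B : Type*} [Ring B] [Algebra ℚ_[p] B]
    (l : List B) : Set B :=
  {z : B | ∃ c : Fin l.length → ℤ_[p], z = ∑ i, ((c i : ℚ_[p]) • l.get i)}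

/-- An order of a quaternion algebra `B` over `ℚ_p`: a unital subring of `B` that is finitely
generated as a `ℤ_p`-module and contains a basis of `B` over `ℚ_p` (equivalently, spans `B`
over `ℚ_p`). -/
def IsOrderP (p : ℕ) [Fact p.Prime] {B : Type*} [Ring B] [Algebra ℚ_[p] B]
    (O : Subring B) : Prop :=
  (∃ l : List B, (∀ y ∈ l, y ∈ O) ∧ ∀ z ∈ O, z ∈ ZpSpan p l) ∧
    Submodule.span ℚ_[p] (O : Set B) = ⊤

/-- A maximal order: an order maximal under inclusion. -/
def IsMaximalOrderP (p : ℕ) [Fact p.Prime] {B : Type*} [Ring B] [Algebra ℚ_[p] B]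
    (O : Subring B) : Prop :=
  IsOrderP p O ∧ ∀ O' : Subring B, IsOrderP p O' → O ≤ O' → O' = O

/-- An Eichler order: the intersection of two maximal orders. -/
def IsEichlerOrderP (p : ℕ) [Fact p.Prime] {B : Type*} [Ring B] [Algebra ℚ_[p] B]
    (O : Subring B) : Prop :=
  ∃ O1 O2 : Subring B, IsMaximalOrderP p O1 ∧ IsMaximalOrderP p O2 ∧ O = O1 ⊓ O2

/-! ### Integrality in orders -/

section Integrality

open Polynomial

variable {p : ℕ} [Fact p.Prime] {B : Type*} [Ring B] [Algebra ℚ_[p] B]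

/-- Elements of an order are integral over `ℤ_p`, as orders are finitely generated modules over a
noetherian ring. -/
lemma exists_monic_of_mem_order {O : Subring B} (hO : IsOrderP p O) {z : B} (hz : z ∈ O) :
    ∃ P : ℤ_[p][X], P.Monic ∧ aeval z (P.map (algebraMap ℤ_[p] ℚ_[p])) = 0 := by
  let : Algebra ℤ_[p] B := Algebra.compHom B (algebraMap ℤ_[p] ℚ_[p])
  have : IsScalarTower ℤ_[p] ℚ_[p] B := IsScalarTower.of_algebraMap_eq fun _ => rfl
  obtain ⟨⟨l, -, hl⟩, -⟩ := hO
  let N : Submodule ℤ_[p] B := Submodule.span ℤ_[p] {y | y ∈ l}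
  have hN : N.FG := Submodule.fg_span l.finite_toSet
  have hle : Subalgebra.toSubmodule (Algebra.adjoin ℤ_[p] {z}) ≤ N := by
    rw [Algebra.adjoin_eq_span, Submodule.span_le]
    intro y hy
    obtain ⟨n, rfl⟩ := Submonoid.mem_closure_singleton.1 hy
    obtain ⟨c, hc⟩ := hl _ (pow_mem hz n)
    simp only [hc]
    refine Submodule.sum_mem _ fun i _ => ?_
    have : ((c i : ℚ_[p]) • l.get i) = c i • l.get i := by
      rw [← algebraMap_smul ℚ_[p] (c i) (l.get i)]; rfl
    rw [this]
    exact Submodule.smul_mem _ _ (Submodule.subset_span (List.get_mem l i))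
  have hfg : (Subalgebra.toSubmodule (Algebra.adjoin ℤ_[p] {z})).FG := by
    have : Module.Finite ℤ_[p] N := Module.Finite.iff_fg.2 hN
    have : IsNoetherian ℤ_[p] N := isNoetherian_of_isNoetherianRing_of_finite _ _
    exact Submodule.FG.of_le hN hle
  obtain ⟨P, hP, h0⟩ := IsIntegral.of_mem_of_fg _ hfg z (Algebra.self_mem_adjoin_singleton _ z)
  refine ⟨P, hP, ?_⟩
  rw [aeval_map_algebraMap]
  exact h0

lemma norm_le_one_of_smul_one_mem [Nontrivial B] {O : Subring B} (hO : IsOrderP p O) {a : ℚ_[p]}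
    (h : a • (1 : B) ∈ O) : ‖a‖ ≤ 1 := by
  obtain ⟨P, hP, h0⟩ := exists_monic_of_mem_order hO h
  rw [← Algebra.algebraMap_eq_smul_one, aeval_algebraMap_apply] at h0
  have h1 := (map_eq_zero_iff _ (algebraMap ℚ_[p] B).injective).1 h0
  have : IsIntegral ℤ_[p] a := ⟨P, hP, by rwa [aeval_map_algebraMap] at h1⟩
  obtain ⟨y, rfl⟩ := IsIntegrallyClosed.isIntegral_iff.1 this
  exact y.2

/-- If an element `z` of an order satisfies `z² = tz - n` and is not a scalar, then
`X² - tX + n` divides a monic integral polynomial, so `t` and `n` are integral by Gauss's lemma. -/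
lemma norm_le_one_of_quadratic [Nontrivial B] {O : Subring B} (hO : IsOrderP p O) {z : B}
    (hz : z ∈ O) (hzs : ∀ a : ℚ_[p], z ≠ a • 1) {t n : ℚ_[p]} (hq : z * z = t • z - n • 1) :
    ‖t‖ ≤ 1 ∧ ‖n‖ ≤ 1 := by
  obtain ⟨P, hP, h0⟩ := exists_monic_of_mem_order hO hz
  set Q := P.map (algebraMap ℤ_[p] ℚ_[p]) with hQ
  let q : ℚ_[p][X] := X ^ 2 + (C (-t) * X + C n)
  have hdeg : (C (-t) * X + C n).degree < 2 := lt_of_le_of_lt degree_linear_le (by norm_num)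
  have hqm : q.Monic := monic_X_pow_add hdeg
  have hqdeg : q.natDegree = 2 := by
    simp only [q]
    compute_degree!
  have hqz : aeval z q = 0 := by
    simp only [q, map_add, map_mul, aeval_X, aeval_C, pow_two, hq,
      Algebra.algebraMap_eq_smul_one, smul_mul_assoc, one_mul]
    module
  have hr : aeval z (Q %ₘ q) = 0 := by
    have := congrArg (aeval z) (modByMonic_add_div Q q)
    rw [map_add, map_mul, hqz, zero_mul, add_zero, h0] at this
    exact this
  have hrd : (Q %ₘ q).natDegree ≤ 1 := by
    have := natDegree_modByMonic_lt Q hqm (fun h => by simp [h] at hqdeg)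
    omega
  have hr0 : Q %ₘ q = 0 := by
    obtain ⟨α, β, h⟩ := exists_eq_X_add_C_of_natDegree_le_one hrd
    rw [h] at hr ⊢
    simp only [map_add, map_mul, aeval_X, aeval_C, Algebra.algebraMap_eq_smul_one, smul_mul_assoc,
      one_mul] at hr
    have hα : α = 0 := by
      by_contra hα
      apply hzs (-(α⁻¹ * β))
      have h2 := congrArg (fun y => α⁻¹ • y) hr
      simp only [smul_add, smul_smul, inv_mul_cancel₀ hα, one_smul, smul_zero] at h2
      rw [neg_smul]
      exact eq_neg_of_add_eq_zero_left h2
    subst hα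
    have hβ : β = 0 := by simpa using hr
    simp [hβ]
  have hdvd : q ∣ Q := (modByMonic_eq_zero_iff_dvd hqm).1 hr0
  obtain ⟨g, hg⟩ := IsIntegrallyClosed.eq_map_mul_C_of_dvd ℚ_[p] hP hdvd
  rw [hqm.leadingCoeff, C_1, mul_one] at hg
  have c0 := congrArg (fun f => coeff f 0) hg
  have c1 := congrArg (fun f => coeff f 1) hg
  simp [q, coeff_X, coeff_C] at c0 c1
  constructor
  · rw [← norm_neg, ← c1]; exact (g.coeff 1).2
  · rw [← c0]; exact (g.coeff 0).2

/-- The reduced trace on `ℍ[F, c₁, c₂, c₃]`. -/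
noncomputable def rtrace {c1 c2 c3 : ℚ_[p]} (z : ℍ[ℚ_[p], c1, c2, c3]) : ℚ_[p] := 2 * z.re + c2 * z.imI

/-- The reduced norm on `ℍ[F, c₁, c₂, c₃]`. -/
noncomputable def rnorm {c1 c2 c3 : ℚ_[p]} (z : ℍ[ℚ_[p], c1, c2, c3]) : ℚ_[p] :=
  (z.re ^ 2 + c2 * z.re * z.imI - c1 * z.imI ^ 2)
    - c3 * (z.imJ ^ 2 + c2 * z.imJ * z.imK - c1 * z.imK ^ 2)

/-- Elements of an order have integral reduced trace and reduced norm. -/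
lemma rtrace_rnorm_integral {c1 c2 c3 : ℚ_[p]} {O : Subring ℍ[ℚ_[p], c1, c2, c3]}
    (hO : IsOrderP p O) {z : ℍ[ℚ_[p], c1, c2, c3]} (hz : z ∈ O) :
    rtrace z ∈ PadicInt.subring p ∧ rnorm z ∈ PadicInt.subring p := by
  by_cases h : ∃ a : ℚ_[p], z = a • 1
  · obtain ⟨a, rfl⟩ := h
    have ha' : a ∈ PadicInt.subring p := norm_le_one_of_smul_one_mem hO hz
    constructor
    · have : (2 * a : ℚ_[p]) ∈ PadicInt.subring p := mul_mem (ofNat_mem _ 2) ha'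
      convert this using 1
      simp [rtrace]
    · have : a ^ 2 ∈ PadicInt.subring p := pow_mem ha' 2
      convert this using 1
      simp [rnorm]
  · push Not at h
    refine norm_le_one_of_quadratic hO hz h ?_
    ext <;> simp [rtrace, rnorm] <;> ring

end Integrality

/-! ### Spans of four elements -/

section Orders

variable {p : ℕ} [Fact p.Prime] {B : Type*} [Ring B] [Algebra ℚ_[p] B]

lemma mem_zpSpan_four {u0 u1 u2 u3 z : B} : z ∈ ZpSpan p [u0, u1, u2, u3] ↔
    ∃ a ∈ PadicInt.subring p, ∃ b ∈ PadicInt.subring p, ∃ c ∈ PadicInt.subring p,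
      ∃ d ∈ PadicInt.subring p, z = a • u0 + b • u1 + c • u2 + d • u3 := by
  constructor
  · rintro ⟨c, hc⟩
    exact ⟨c 0, (c 0).2, c 1, (c 1).2, c 2, (c 2).2, c 3, (c 3).2,
      hc.trans (Fin.sum_univ_four _)⟩
  · rintro ⟨a, ha, b, hb, c, hc, d, hd, h⟩
    exact ⟨![⟨a, ha⟩, ⟨b, hb⟩, ⟨c, hc⟩, ⟨d, hd⟩], by
      rw [h]
      exact (Fin.sum_univ_four (M := B) (fun i : Fin 4 =>
        ((![⟨a, ha⟩, ⟨b, hb⟩, ⟨c, hc⟩, ⟨d, hd⟩] i : ℤ_[p]) : ℚ_[p]) •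
          [u0, u1, u2, u3].get i)).symm⟩

lemma isOrderP_of_four {O : Subring B} (u0 u1 u2 u3 : B) (h0 : u0 ∈ O) (h1 : u1 ∈ O)
    (h2 : u2 ∈ O) (h3 : u3 ∈ O) (hO : ∀ z ∈ O, z ∈ ZpSpan p [u0, u1, u2, u3])
    (hspan : ∀ z : B, ∃ a b c d : ℚ_[p], z = a • u0 + b • u1 + c • u2 + d • u3) :
    IsOrderP p O := by
  refine ⟨⟨[u0, u1, u2, u3], by simp [h0, h1, h2, h3], hO⟩, ?_⟩
  rw [eq_top_iff]
  rintro z -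
  obtain ⟨a, b, c, d, rfl⟩ := hspan z
  have key : ∀ (r : ℚ_[p]) (u : B), u ∈ O → r • u ∈ Submodule.span ℚ_[p] (O : Set B) :=
    fun r u hu => Submodule.smul_mem _ _ (Submodule.subset_span hu)
  exact add_mem (add_mem (add_mem (key _ _ h0) (key _ _ h1)) (key _ _ h2)) (key _ _ h3)

/-! ### The order spanned by `1, v₁, v₂, v₁v₂` -/

/-- The relations satisfied by `v₁, v₂`, where `Dᵢ = 4 dᵢ + eᵢ²` and `x = 2 m + e₁ e₂`. -/
structure PairRel (v1 v2 : B) (e1 d1 e2 d2 m : ℚ_[p]) : Prop where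
  r11 : v1 * v1 = e1 • v1 + d1 • 1
  r22 : v2 * v2 = e2 • v2 + d2 • 1
  r21 : v2 * v1 = -(v1 * v2) + e1 • v2 + e2 • v1 + m • 1

/-- The element `a + b v₁ + c v₂ + d v₁v₂`. -/
noncomputable def combo (v1 v2 : B) (a b c d : ℚ_[p]) : B := a • 1 + b • v1 + c • v2 + d • (v1 * v2)

variable {v1 v2 : B} {e1 d1 e2 d2 m : ℚ_[p]}

lemma combo_mul (h : PairRel v1 v2 e1 d1 e2 d2 m) (a b c d a' b' c' d' : ℚ_[p]) :
    combo v1 v2 a b c d * combo v1 v2 a' b' c' d' = combo v1 v2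
      (a * a' + d1 * b * b' + m * c * b' + d2 * c * c' + e1 * d2 * c * d' + e2 * d1 * d * b'
        - d1 * d2 * d * d')
      (a * b' + b * a' + e1 * b * b' + e2 * c * b' - d2 * c * d' + (m + e1 * e2) * d * b'
        + d2 * d * c')
      (a * c' + c * a' + d1 * b * d' + e1 * c * b' + e2 * c * c' + (m + e1 * e2) * c * d'
        - d1 * d * b')
      (a * d' + d * a' + b * c' + e1 * b * d' - c * b' + e2 * d * c' + (m + e1 * e2) * d * d') := by
  obtain ⟨h11, h22, h21⟩ := h
  have h13 : v1 * (v1 * v2) = e1 • (v1 * v2) + d1 • v2 := by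
    rw [← mul_assoc, h11, add_mul, smul_mul_assoc, smul_mul_assoc, one_mul]
  have h32 : (v1 * v2) * v2 = e2 • (v1 * v2) + d2 • v1 := by
    rw [mul_assoc, h22, mul_add, mul_smul_comm, mul_smul_comm, mul_one]
  have h23 : v2 * (v1 * v2) = (-d2) • v1 + (m + e1 * e2) • v2 + (e1 * d2) • 1 := by
    rw [← mul_assoc, h21]
    simp only [add_mul, neg_mul, smul_mul_assoc, one_mul, h32, h22]
    module
  have h31 : (v1 * v2) * v1 = (-d1) • v2 + (m + e1 * e2) • v1 + (e2 * d1) • 1 := by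
    rw [mul_assoc, h21]
    simp only [mul_add, mul_neg, mul_smul_comm, mul_one, h13, h11]
    module
  have h33 : (v1 * v2) * (v1 * v2) = (-(d1 * d2)) • 1 + (m + e1 * e2) • (v1 * v2) := by
    rw [mul_assoc, h23]
    simp only [mul_add, mul_smul_comm, mul_one, h11]
    module
  simp only [combo]
  generalize hu : v1 * v2 = u at *
  simp only [add_mul, mul_add, smul_mul_assoc, mul_smul_comm, one_mul, mul_one,
    h11, h22, h21, h13, h32, h23, h31, h33, hu]
  module

lemma one_eq_combo : (1 : B) = combo v1 v2 (1 : ℚ_[p]) 0 0 0 := by simp [combo]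
lemma v1_eq_combo : v1 = combo v1 v2 (0 : ℚ_[p]) 1 0 0 := by simp [combo]
lemma v2_eq_combo : v2 = combo v1 v2 (0 : ℚ_[p]) 0 1 0 := by simp [combo]
lemma v1v2_eq_combo : v1 * v2 = combo v1 v2 (0 : ℚ_[p]) 0 0 1 := by simp [combo]

/-- The subring with underlying set the `ℤ_p`-span of `1, v₁, v₂, v₁v₂`. -/
noncomputable def pairOrder (h : PairRel v1 v2 e1 d1 e2 d2 m)
    (he1 : e1 ∈ PadicInt.subring p) (hd1 : d1 ∈ PadicInt.subring p)
    (he2 : e2 ∈ PadicInt.subring p) (hd2 : d2 ∈ PadicInt.subring p)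
    (hm : m ∈ PadicInt.subring p) : Subring B where
  carrier := {z | ∃ a ∈ PadicInt.subring p, ∃ b ∈ PadicInt.subring p,
    ∃ c ∈ PadicInt.subring p, ∃ d ∈ PadicInt.subring p, z = combo v1 v2 a b c d}
  mul_mem' := by
    rintro _ _ ⟨a, ha, b, hb, c, hc, d, hd, rfl⟩ ⟨a', ha', b', hb', c', hc', d', hd', rfl⟩
    refine ⟨_, ?_, _, ?_, _, ?_, _, ?_, combo_mul h a b c d a' b' c' d'⟩
    all_goals
      repeat' first
        | assumption
        | apply add_mem
        | apply sub_mem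
        | apply mul_mem
  one_mem' := ⟨1, one_mem _, 0, zero_mem _, 0, zero_mem _, 0, zero_mem _, one_eq_combo⟩
  zero_mem' := ⟨0, zero_mem _, 0, zero_mem _, 0, zero_mem _, 0, zero_mem _, by simp [combo]⟩
  add_mem' := by
    rintro _ _ ⟨a, ha, b, hb, c, hc, d, hd, rfl⟩ ⟨a', ha', b', hb', c', hc', d', hd', rfl⟩
    refine ⟨_, add_mem ha ha', _, add_mem hb hb', _, add_mem hc hc', _, add_mem hd hd', ?_⟩
    simp only [combo]; module
  neg_mem' := by
    rintro _ ⟨a, ha, b, hb, c, hc, d, hd, rfl⟩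
    refine ⟨_, neg_mem ha, _, neg_mem hb, _, neg_mem hc, _, neg_mem hd, ?_⟩
    simp only [combo]; module

lemma pairOrder_coe (h : PairRel v1 v2 e1 d1 e2 d2 m) (he1) (hd1) (he2) (hd2) (hm) :
    (pairOrder h he1 hd1 he2 hd2 hm : Set B) = ZpSpan p [1, v1, v2, v1 * v2] := by
  ext z
  rw [mem_zpSpan_four]
  rfl

end Orders

/-! ### Transport along algebra isomorphisms -/

section Transport

variable {p : ℕ} [Fact p.Prime] {B B' : Type*} [Ring B] [Algebra ℚ_[p] B]
  [Ring B'] [Algebra ℚ_[p] B']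

lemma zpSpan_map (φ : B ≃ₐ[ℚ_[p]] B') (l : List B) :
    ZpSpan p (l.map φ) = φ '' ZpSpan p l := by
  ext z
  constructor
  · rintro ⟨c, rfl⟩
    refine ⟨∑ i, ((c (Fin.cast (by simp) i) : ℚ_[p]) • l.get i), ⟨_, rfl⟩, ?_⟩
    rw [map_sum]
    refine Fintype.sum_equiv (finCongr (by simp)) _ _ fun i => ?_
    simp
  · rintro ⟨_, ⟨c, rfl⟩, rfl⟩
    refine ⟨fun i => c (Fin.cast (by simp) i), ?_⟩
    rw [map_sum]
    refine Fintype.sum_equiv (finCongr (by simp)) _ _ fun i => ?_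
    simp

/-- The image of a subring under an algebra isomorphism. -/
noncomputable def mapO (φ : B ≃ₐ[ℚ_[p]] B') (O : Subring B) : Subring B' := O.map (φ : B →+* B')

lemma mem_mapO {φ : B ≃ₐ[ℚ_[p]] B'} {O : Subring B} {z : B'} :
    z ∈ mapO φ O ↔ φ.symm z ∈ O := by
  simp only [mapO, Subring.mem_map]
  constructor
  · rintro ⟨y, hy, rfl⟩
    simpa using hy
  · intro h
    exact ⟨_, h, by simp⟩

lemma coe_mapO (φ : B ≃ₐ[ℚ_[p]] B') (O : Subring B) : (mapO φ O : Set B') = φ '' O := rfl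

lemma mapO_symm_mapO (φ : B ≃ₐ[ℚ_[p]] B') (O : Subring B) : mapO φ.symm (mapO φ O) = O := by
  ext z; simp [mem_mapO]

lemma mapO_mapO_symm (φ : B ≃ₐ[ℚ_[p]] B') (O : Subring B') : mapO φ (mapO φ.symm O) = O := by
  ext z; simp [mem_mapO]

lemma mapO_mono (φ : B ≃ₐ[ℚ_[p]] B') {O O' : Subring B} (h : O ≤ O') : mapO φ O ≤ mapO φ O' :=
  fun _ hz => mem_mapO.2 (h (mem_mapO.1 hz))

lemma IsOrderP.mapO (φ : B ≃ₐ[ℚ_[p]] B') {O : Subring B} (h : IsOrderP p O) :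
    IsOrderP p (mapO φ O) := by
  obtain ⟨⟨l, hl, hO⟩, hs⟩ := h
  refine ⟨⟨l.map φ, ?_, ?_⟩, ?_⟩
  · intro y hy
    obtain ⟨y', hy', rfl⟩ := List.mem_map.1 hy
    exact mem_mapO.2 (by simpa using hl y' hy')
  · intro z hz
    rw [zpSpan_map]
    exact ⟨_, hO _ (mem_mapO.1 hz), by simp⟩
  · have := congrArg (Submodule.map φ.toLinearMap) hs
    rw [Submodule.map_span, Submodule.map_top, LinearMap.range_eq_top.2 φ.surjective] at this
    exact this

lemma IsMaximalOrderP.mapO (φ : B ≃ₐ[ℚ_[p]] B') {O : Subring B} (h : IsMaximalOrderP p O) :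
    IsMaximalOrderP p (mapO φ O) := by
  refine ⟨h.1.mapO φ, fun O' hO' hle => ?_⟩
  have h1 := h.2 _ (hO'.mapO φ.symm) (by
    have := mapO_mono φ.symm hle
    rwa [mapO_symm_mapO] at this)
  rw [← h1, mapO_mapO_symm]

lemma IsEichlerOrderP.mapO (φ : B ≃ₐ[ℚ_[p]] B') {O : Subring B} (h : IsEichlerOrderP p O) :
    IsEichlerOrderP p (mapO φ O) := by
  obtain ⟨O1, O2, h1, h2, rfl⟩ := h
  refine ⟨_, _, h1.mapO φ, h2.mapO φ, ?_⟩
  ext z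
  simp [mem_mapO]

lemma existsUnique_maximal_mapO (φ : B ≃ₐ[ℚ_[p]] B') {O : Subring B}
    (h : ∃! M : Subring B, IsMaximalOrderP p M ∧ O ≤ M) :
    ∃! M : Subring B', IsMaximalOrderP p M ∧ mapO φ O ≤ M := by
  obtain ⟨M, ⟨hM, hle⟩, hu⟩ := h
  refine ⟨_, ⟨hM.mapO φ, mapO_mono φ hle⟩, fun M' ⟨hM', hle'⟩ => ?_⟩
  have := hu _ ⟨hM'.mapO φ.symm, by
    have := mapO_mono φ.symm hle'
    rwa [mapO_symm_mapO] at this⟩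
  rw [← this, mapO_mapO_symm]

end Transport

/-! ### A quaternion model of the algebra -/

section Model

variable {p : ℕ} [Fact p.Prime]

/-- A unital homomorphism from a nondegenerate quaternion algebra is injective. -/
lemma quaternion_hom_injective {B : Type*} [Ring B] [Algebra ℚ_[p] B] [Nontrivial B]
    {c1 c2 c3 : ℚ_[p]} (hD : 4 * c1 + c2 ^ 2 ≠ 0) (hc : c3 ≠ 0)
    (φ : ℍ[ℚ_[p], c1, c2, c3] →ₐ[ℚ_[p]] B) : Function.Injective φ := by
  set D := 4 * c1 + c2 ^ 2 with hDd
  have tr0 : ∀ q, φ q = 0 → rtrace q = 0 := by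
    intro q hq
    -- averaging the conjugates of `q` by `1, w, j, wj` gives the scalar `2 * rtrace q`
    have key : q + D⁻¹ • ((⟨-c2, 2, 0, 0⟩ : ℍ[ℚ_[p], c1, c2, c3]) * q * ⟨-c2, 2, 0, 0⟩)
        + c3⁻¹ • ((⟨0, 0, 1, 0⟩ : ℍ[ℚ_[p], c1, c2, c3]) * q * ⟨0, 0, 1, 0⟩)
        - (D * c3)⁻¹ • ((⟨0, 0, -c2, 2⟩ : ℍ[ℚ_[p], c1, c2, c3]) * q * ⟨0, 0, -c2, 2⟩)
        = algebraMap ℚ_[p] _ (2 * rtrace q) := by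
      rw [QuaternionAlgebra.algebraMap_eq]
      ext <;> simp [rtrace] <;> field_simp <;> rw [hDd] <;> ring
    generalize ht : 2 * rtrace q = t at key
    have := congrArg φ key
    rw [AlgHom.commutes] at this
    simp only [map_add, map_sub, map_smul, map_mul, hq, mul_zero, zero_mul, smul_zero, add_zero,
      sub_zero] at this
    have h2 := (map_eq_zero_iff _ (algebraMap ℚ_[p] B).injective).1 this.symm
    rw [h2] at ht
    simpa using ht
  rw [injective_iff_map_eq_zero]
  intro q hq
  have h1 := tr0 q hq
  have h2 := tr0 (q * ⟨0, 1, 0, 0⟩) (by rw [map_mul, hq, zero_mul])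
  have h3 := tr0 (q * ⟨0, 0, 1, 0⟩) (by rw [map_mul, hq, zero_mul])
  have h4 := tr0 (q * ⟨0, 0, 0, 1⟩) (by rw [map_mul, hq, zero_mul])
  simp [rtrace] at h1 h2 h3 h4
  have two : (2 : ℚ_[p]) ≠ 0 := two_ne_zero
  ext
  · refine (mul_eq_zero.1 (?_ : D * q.re = 0)).resolve_left hD
    linear_combination (2 * c1 + c2 ^ 2) * h1 - c2 * h2
  · refine (mul_eq_zero.1 (?_ : D * q.imI = 0)).resolve_left hD
    linear_combination 2 * h2 - c2 * h1
  · refine (mul_eq_zero.1 (?_ : c3 * D * q.imJ = 0)).resolve_left (mul_ne_zero hc hD)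
    linear_combination 2 * c1 * h3 + c2 * h4
  · refine (mul_eq_zero.1 (?_ : c3 * D * q.imK = 0)).resolve_left (mul_ne_zero hc hD)
    linear_combination c2 * h3 - 2 * h4

/-- The algebra `B` is the quaternion algebra with `i = v₁` and `j = v₂ - r - s v₁` the component
of `v₂` anticommuting with `w₁ = 2 v₁ - e₁`; the equations for `e₂` and `m` express the choice of
`r` and `s`. -/
lemma exists_model {B : Type*} [Ring B] [Algebra ℚ_[p] B] (hB : Module.finrank ℚ_[p] B = 4)
    {v1 v2 : B} {e1 d1 e2 d2 m r s c : ℚ_[p]} (h : PairRel v1 v2 e1 d1 e2 d2 m)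
    (he2 : e2 = 2 * r + e1 * s) (hm : m = 2 * s * d1 - e1 * r)
    (hc : c = d2 + r ^ 2 + e1 * r * s - d1 * s ^ 2)
    (hD : 4 * d1 + e1 ^ 2 ≠ 0) (hc0 : c ≠ 0) :
    ∃ φ : ℍ[ℚ_[p], d1, e1, c] ≃ₐ[ℚ_[p]] B, φ ⟨0, 1, 0, 0⟩ = v1 ∧ φ ⟨r, s, 1, 0⟩ = v2 := by
  have : Nontrivial B := Module.nontrivial_of_finrank_pos (R := ℚ_[p]) (by omega)
  obtain ⟨h11, h22, h21⟩ := h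
  subst he2 hm hc
  let q : QuaternionAlgebra.Basis B d1 e1 (d2 + r ^ 2 + e1 * r * s - d1 * s ^ 2) :=
    { i := v1
      j := v2 - r • 1 - s • v1
      k := v1 * v2 - r • v1 - s • (e1 • v1 + d1 • 1)
      i_mul_i := by rw [h11, add_comm]
      i_mul_j := by
        simp only [mul_sub, mul_smul_comm, mul_one, h11]
      j_mul_i := by
        simp only [sub_mul, smul_mul_assoc, one_mul, h11, h21]
        module
      j_mul_j := by
        simp only [sub_mul, mul_sub, smul_mul_assoc, mul_smul_comm, one_mul, mul_one, h11, h21,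
          h22]
        module }
  have hinj := quaternion_hom_injective hD hc0 q.liftHom
  have hfd : FiniteDimensional ℚ_[p] B := FiniteDimensional.of_finrank_pos (by omega)
  have hsurj := (LinearMap.injective_iff_surjective_of_finrank_eq_finrank
    (f := q.liftHom.toLinearMap) (by rw [hB, QuaternionAlgebra.finrank_eq_four])).1 hinj
  refine ⟨AlgEquiv.ofBijective q.liftHom ⟨hinj, hsurj⟩, ?_, ?_⟩
  · simp [QuaternionAlgebra.Basis.lift, q]
  · simp [QuaternionAlgebra.Basis.lift, q, Algebra.algebraMap_eq_smul_one]

end Model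

/-! ### Unit reduced discriminant -/

section Maximality

variable {p : ℕ} [Fact p.Prime] {e1 d1 c : ℚ_[p]}

lemma mem_of_unit_mul {u a : ℚ_[p]} (hu : ‖u‖ = 1) (h : u * a ∈ PadicInt.subring p) :
    a ∈ PadicInt.subring p := by
  change ‖u * a‖ ≤ 1 at h
  rwa [norm_mul, hu, one_mul] at h

lemma inv_mem_of_unit {u : ℚ_[p]} (hu : ‖u‖ = 1) : u⁻¹ ∈ PadicInt.subring p := by
  change ‖u⁻¹‖ ≤ 1
  rw [norm_inv, hu, inv_one]

lemma eq_combo_model (r s : ℚ_[p]) (z : ℍ[ℚ_[p], d1, e1, c]) :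
    z = combo (⟨0, 1, 0, 0⟩ : ℍ[ℚ_[p], d1, e1, c]) ⟨r, s, 1, 0⟩
      (z.re - r * z.imJ - s * d1 * z.imK) (z.imI - s * z.imJ - (r + s * e1) * z.imK)
      z.imJ z.imK := by
  ext <;> simp [combo] <;> ring

lemma imK_combo_model (r s a b x y : ℚ_[p]) :
    (combo (⟨0, 1, 0, 0⟩ : ℍ[ℚ_[p], d1, e1, c]) ⟨r, s, 1, 0⟩ a b x y).imK = y := by
  simp [combo]

/-- Pairing with the commutator `v₁v₂ - v₂v₁` under the reduced trace extracts the coefficient of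
`v₁v₂`, up to the reduced discriminant `(4 d₁ + e₁²) c`. -/
lemma rtrace_mul_commutator (r s : ℚ_[p]) (z : ℍ[ℚ_[p], d1, e1, c]) :
    rtrace (z * ((⟨0, 1, 0, 0⟩ : ℍ[ℚ_[p], d1, e1, c]) * ⟨r, s, 1, 0⟩
      - ⟨r, s, 1, 0⟩ * ⟨0, 1, 0, 0⟩)) = -((4 * d1 + e1 ^ 2) * c * z.imK) := by
  simp [rtrace]
  ring

/-- An order containing `v₁, v₂` whose reduced discriminant `(4 d₁ + e₁²) c` is a unit contains
nothing but the `ℤ_p`-span of `1, v₁, v₂, v₁v₂`: the `v₁v₂`-coordinates of `z, v₁z, v₂z, v₁v₂z` are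
integral, and determine all coordinates of `z`. -/
lemma mem_zpSpan_of_unit_disc {e2 d2 m r s : ℚ_[p]}
    (h : PairRel (⟨0, 1, 0, 0⟩ : ℍ[ℚ_[p], d1, e1, c]) ⟨r, s, 1, 0⟩ e1 d1 e2 d2 m)
    (he1 : e1 ∈ PadicInt.subring p) (he2 : e2 ∈ PadicInt.subring p)
    (hm : m ∈ PadicInt.subring p) (hN : ‖(4 * d1 + e1 ^ 2) * c‖ = 1)
    {O : Subring ℍ[ℚ_[p], d1, e1, c]} (hO : IsOrderP p O)
    (h1 : (⟨0, 1, 0, 0⟩ : ℍ[ℚ_[p], d1, e1, c]) ∈ O) (h2 : ⟨r, s, 1, 0⟩ ∈ O)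
    {z : ℍ[ℚ_[p], d1, e1, c]} (hz : z ∈ O) :
    z ∈ ZpSpan p [1, ⟨0, 1, 0, 0⟩, ⟨r, s, 1, 0⟩,
      (⟨0, 1, 0, 0⟩ : ℍ[ℚ_[p], d1, e1, c]) * ⟨r, s, 1, 0⟩] := by
  have hK : ∀ y ∈ O, y.imK ∈ PadicInt.subring p := by
    intro y hy
    have := (rtrace_rnorm_integral hO (mul_mem hy (sub_mem (mul_mem h1 h2) (mul_mem h2 h1)))).1
    rw [rtrace_mul_commutator, neg_mem_iff] at this
    exact mem_of_unit_mul hN this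
  rw [eq_combo_model r s z] at hz ⊢
  generalize z.re - r * z.imJ - s * d1 * z.imK = a at *
  generalize z.imI - s * z.imJ - (r + s * e1) * z.imK = b at *
  generalize z.imJ = x at *
  generalize z.imK = y at *
  have k0 := hK _ hz
  have k1 := hK _ (mul_mem h1 hz)
  have k2 := hK _ (mul_mem h2 hz)
  have k3 := hK _ (mul_mem (mul_mem h1 h2) hz)
  rw [imK_combo_model] at k0
  rw [v1v2_eq_combo (p := p) (v1 := (⟨0, 1, 0, 0⟩ : ℍ[ℚ_[p], d1, e1, c])) (v2 := ⟨r, s, 1, 0⟩),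
    combo_mul h, imK_combo_model] at k3
  nth_rw 1 [v1_eq_combo (p := p) (v1 := (⟨0, 1, 0, 0⟩ : ℍ[ℚ_[p], d1, e1, c])) (v2 := ⟨r, s, 1, 0⟩)] at k1
  nth_rw 1 [v2_eq_combo (p := p) (v1 := (⟨0, 1, 0, 0⟩ : ℍ[ℚ_[p], d1, e1, c])) (v2 := ⟨r, s, 1, 0⟩)] at k2
  rw [combo_mul h, imK_combo_model] at k1 k2
  have hx : x ∈ PadicInt.subring p := by
    convert sub_mem k1 (mul_mem he1 k0) using 1; ring
  have hb : b ∈ PadicInt.subring p := by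
    convert neg_mem k2 using 1; ring
  have ha : a ∈ PadicInt.subring p := by
    convert sub_mem k3 (add_mem (mul_mem he2 hx)
      (mul_mem (add_mem hm (mul_mem he1 he2)) k0)) using 1
    ring
  rw [mem_zpSpan_four]
  exact ⟨a, ha, b, hb, x, hx, y, k0, rfl⟩

/-! ### The split case -/

/-- Let `e₁ = r₁ + r₂`, `d₁ = -r₁r₂` and `c = wστ`. With `α, δ` the values of `z.re + z.imI i` and
`β, γ` those of `z.imJ + z.imK i` at `i = r₁, r₂`, the map sending `z` to the matrix with rows
`(α, σβ)` and `(wτγ, δ)` is multiplicative; this is the order where `α, δ, σβ, τγ` are integral. -/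
noncomputable def splitOrder {r1 r2 w : ℚ_[p]} (σ τ : ℚ_[p])
    (hd1 : d1 = -(r1 * r2)) (he1 : e1 = r1 + r2) (hw : w ∈ PadicInt.subring p)
    (hc : c = w * σ * τ) : Subring ℍ[ℚ_[p], d1, e1, c] where
  carrier := {z | z.re + r1 * z.imI ∈ PadicInt.subring p ∧
    z.re + r2 * z.imI ∈ PadicInt.subring p ∧
    σ * (z.imJ + r1 * z.imK) ∈ PadicInt.subring p ∧
    τ * (z.imJ + r2 * z.imK) ∈ PadicInt.subring p}
  mul_mem' := by
    rintro y z ⟨y1, y2, y3, y4⟩ ⟨z1, z2, z3, z4⟩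
    refine ⟨?_, ?_, ?_, ?_⟩
    · convert add_mem (mul_mem y1 z1) (mul_mem hw (mul_mem y3 z4)) using 1
      simp [hd1, he1, hc]; ring
    · convert add_mem (mul_mem y2 z2) (mul_mem hw (mul_mem y4 z3)) using 1
      simp [hd1, he1, hc]; ring
    · convert add_mem (mul_mem y1 z3) (mul_mem y3 z2) using 1
      simp [hd1, he1]; ring
    · convert add_mem (mul_mem y2 z4) (mul_mem y4 z1) using 1
      simp [hd1, he1]; ring
  one_mem' := by simp
  zero_mem' := by simp
  add_mem' := by
    rintro y z ⟨y1, y2, y3, y4⟩ ⟨z1, z2, z3, z4⟩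
    refine ⟨?_, ?_, ?_, ?_⟩
    · convert add_mem y1 z1 using 1; simp; ring
    · convert add_mem y2 z2 using 1; simp; ring
    · convert add_mem y3 z3 using 1; simp; ring
    · convert add_mem y4 z4 using 1; simp; ring
  neg_mem' := by
    rintro y ⟨y1, y2, y3, y4⟩
    refine ⟨?_, ?_, ?_, ?_⟩
    · convert neg_mem y1 using 1; simp; ring
    · convert neg_mem y2 using 1; simp; ring
    · convert neg_mem y3 using 1; simp; ring
    · convert neg_mem y4 using 1; simp; ring

lemma mem_splitOrder {r1 r2 w σ τ : ℚ_[p]} {hd1 : d1 = -(r1 * r2)} {he1 : e1 = r1 + r2}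
    {hw : w ∈ PadicInt.subring p} {hc : c = w * σ * τ} {z : ℍ[ℚ_[p], d1, e1, c]} :
    z ∈ splitOrder σ τ hd1 he1 hw hc ↔ z.re + r1 * z.imI ∈ PadicInt.subring p ∧
      z.re + r2 * z.imI ∈ PadicInt.subring p ∧
      σ * (z.imJ + r1 * z.imK) ∈ PadicInt.subring p ∧
      τ * (z.imJ + r2 * z.imK) ∈ PadicInt.subring p := Iff.rfl

/-- With `w` a unit and `r₁ ≠ r₂` the order is isomorphic to the full matrix ring over `ℤ_p`; its matrix units
are self-dual up to units for the trace form. -/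
lemma splitOrder_maximal {r1 r2 w σ τ : ℚ_[p]} (hd1 : d1 = -(r1 * r2)) (he1 : e1 = r1 + r2)
    (hw : w ∈ PadicInt.subring p) (hc : c = w * σ * τ) (hw1 : ‖w‖ = 1) (hσ : σ ≠ 0) (hτ : τ ≠ 0)
    (hr : r1 - r2 ≠ 0) :
    IsMaximalOrderP p (splitOrder σ τ hd1 he1 hw hc : Subring ℍ[ℚ_[p], d1, e1, c]) := by
  set O := (splitOrder σ τ hd1 he1 hw hc : Subring ℍ[ℚ_[p], d1, e1, c]) with hO
  obtain ⟨E, hE⟩ : ∃ E : ℍ[ℚ_[p], d1, e1, c], E = ⟨-r2 / (r1 - r2), 1 / (r1 - r2), 0, 0⟩ :=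
    ⟨_, rfl⟩
  obtain ⟨E', hE'⟩ : ∃ E : ℍ[ℚ_[p], d1, e1, c], E = ⟨r1 / (r1 - r2), -1 / (r1 - r2), 0, 0⟩ :=
    ⟨_, rfl⟩
  obtain ⟨f, hf⟩ : ∃ E : ℍ[ℚ_[p], d1, e1, c],
    E = ⟨0, 0, -r2 / (r1 - r2) / σ, 1 / (r1 - r2) / σ⟩ := ⟨_, rfl⟩
  obtain ⟨g, hg⟩ : ∃ E : ℍ[ℚ_[p], d1, e1, c],
    E = ⟨0, 0, r1 / (r1 - r2) / τ, -1 / (r1 - r2) / τ⟩ := ⟨_, rfl⟩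
  have aux : ∀ z : ℚ_[p], (z = 0 ∨ z = 1) → z ∈ PadicInt.subring p := by
    rintro z (rfl | rfl)
    exacts [zero_mem _, one_mem _]
  have mE : E ∈ O := by
    rw [hO, mem_splitOrder, hE]
    refine ⟨aux _ (Or.inr ?_), aux _ (Or.inl ?_), aux _ (Or.inl ?_), aux _ (Or.inl ?_)⟩ <;>
      first | ring1 | (field_simp; ring1)
  have mE' : E' ∈ O := by
    rw [hO, mem_splitOrder, hE']
    refine ⟨aux _ (Or.inl ?_), aux _ (Or.inr ?_), aux _ (Or.inl ?_), aux _ (Or.inl ?_)⟩ <;>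
      first | ring1 | (field_simp; ring1)
  have mf : f ∈ O := by
    rw [hO, mem_splitOrder, hf]
    refine ⟨aux _ (Or.inl ?_), aux _ (Or.inl ?_), aux _ (Or.inr ?_), aux _ (Or.inl ?_)⟩ <;>
      first | ring1 | (field_simp; ring1)
  have mg : g ∈ O := by
    rw [hO, mem_splitOrder, hg]
    refine ⟨aux _ (Or.inl ?_), aux _ (Or.inl ?_), aux _ (Or.inl ?_), aux _ (Or.inr ?_)⟩ <;>
      first | ring1 | (field_simp; ring1)
  have hz : ∀ z : ℍ[ℚ_[p], d1, e1, c], z = (z.re + r1 * z.imI) • E + (z.re + r2 * z.imI) • E'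
      + (σ * (z.imJ + r1 * z.imK)) • f + (τ * (z.imJ + r2 * z.imK)) • g := by
    intro z
    rw [hE, hE', hf, hg]
    ext <;> simp <;> field_simp <;> ring
  refine ⟨isOrderP_of_four E E' f g mE mE' mf mg ?_ fun z => ⟨_, _, _, _, hz z⟩, ?_⟩
  · intro z hzO
    rw [hO, mem_splitOrder] at hzO
    rw [mem_zpSpan_four]
    exact ⟨_, hzO.1, _, hzO.2.1, _, hzO.2.2.1, _, hzO.2.2.2, hz z⟩
  · intro O' hO' hle
    refine le_antisymm (fun z hzO => ?_) hle
    have t1 := (rtrace_rnorm_integral hO' (mul_mem hzO (hle mE))).1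
    have t2 := (rtrace_rnorm_integral hO' (mul_mem hzO (hle mE'))).1
    have t3 := (rtrace_rnorm_integral hO' (mul_mem hzO (hle mg))).1
    have t4 := (rtrace_rnorm_integral hO' (mul_mem hzO (hle mf))).1
    rw [hO, mem_splitOrder]
    refine ⟨?_, ?_, mem_of_unit_mul hw1 ?_, mem_of_unit_mul hw1 ?_⟩
    · convert t1 using 1
      simp [rtrace, hE, hd1, he1]; field_simp; ring
    · convert t2 using 1
      simp [rtrace, hE', hd1, he1]; field_simp; ring
    · convert t3 using 1
      simp [rtrace, hg, hd1, he1, hc]; field_simp; ring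
    · convert t4 using 1
      simp [rtrace, hf, hd1, he1, hc]; field_simp; ring

/-- The order with all four coordinates integral is the intersection of the two maximal orders
with `(σ, τ) = (1, c)` and `(σ, τ) = (c, 1)`. -/
lemma eichler_of_split {r1 r2 : ℚ_[p]} (hd1 : d1 = -(r1 * r2)) (he1 : e1 = r1 + r2)
    (hr1 : r1 ∈ PadicInt.subring p) (hr2 : r2 ∈ PadicInt.subring p) (hr : ‖r1 - r2‖ = 1)
    (hcm : c ∈ PadicInt.subring p) (hc0 : c ≠ 0) {O : Subring ℍ[ℚ_[p], d1, e1, c]}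
    (hO : ∀ z, z ∈ O ↔ z.re ∈ PadicInt.subring p ∧ z.imI ∈ PadicInt.subring p ∧
      z.imJ ∈ PadicInt.subring p ∧ z.imK ∈ PadicInt.subring p) :
    IsEichlerOrderP p O := by
  have hr0 : r1 - r2 ≠ 0 := fun h => by simp [h] at hr
  refine ⟨splitOrder 1 c hd1 he1 (one_mem _) (by ring), splitOrder c 1 hd1 he1 (one_mem _) (by ring),
    splitOrder_maximal hd1 he1 _ _ norm_one one_ne_zero hc0 hr0,
    splitOrder_maximal hd1 he1 _ _ norm_one hc0 one_ne_zero hr0, ?_⟩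
  have back : ∀ a b : ℚ_[p], a + r1 * b ∈ PadicInt.subring p → a + r2 * b ∈ PadicInt.subring p →
      a ∈ PadicInt.subring p ∧ b ∈ PadicInt.subring p := by
    intro a b h1 h2
    have hb : b ∈ PadicInt.subring p := mem_of_unit_mul hr (by
      convert sub_mem h1 h2 using 1
      ring)
    refine ⟨?_, hb⟩
    convert sub_mem h1 (mul_mem hr1 hb) using 1
    ring
  ext z
  rw [hO, Subring.mem_inf, mem_splitOrder, mem_splitOrder, one_mul, one_mul]
  constructor
  · rintro ⟨h1, h2, h3, h4⟩
    have k1 := add_mem h1 (mul_mem hr1 h2)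
    have k2 := add_mem h1 (mul_mem hr2 h2)
    have k3 := add_mem h3 (mul_mem hr1 h4)
    have k4 := add_mem h3 (mul_mem hr2 h4)
    exact ⟨⟨k1, k2, k3, mul_mem hcm k4⟩, k1, k2, mul_mem hcm k3, k4⟩
  · rintro ⟨⟨k1, k2, k3, -⟩, -, -, -, k4⟩
    exact ⟨(back _ _ k1 k2).1, (back _ _ k1 k2).2, (back _ _ k3 k4).1, (back _ _ k3 k4).2⟩

/-! ### The inert case -/

/-- The order `R + R (j / σ)` with `R = ℤ_p[i]`, where `(j / σ)² = w` is integral. -/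
noncomputable def inertOrder {w : ℚ_[p]} (σ : ℚ_[p]) (hd1 : d1 ∈ PadicInt.subring p)
    (he1 : e1 ∈ PadicInt.subring p) (hw : w ∈ PadicInt.subring p)
    (hc : c = w * σ ^ 2) : Subring ℍ[ℚ_[p], d1, e1, c] where
  carrier := {z | z.re ∈ PadicInt.subring p ∧ z.imI ∈ PadicInt.subring p ∧
    σ * z.imJ ∈ PadicInt.subring p ∧ σ * z.imK ∈ PadicInt.subring p}
  mul_mem' := by
    rintro y z ⟨y1, y2, y3, y4⟩ ⟨z1, z2, z3, z4⟩
    refine ⟨?_, ?_, ?_, ?_⟩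
    · convert sub_mem (add_mem (add_mem (add_mem (mul_mem y1 z1) (mul_mem hd1 (mul_mem y2 z2)))
        (mul_mem hw (mul_mem y3 z3))) (mul_mem (mul_mem he1 hw) (mul_mem y3 z4)))
        (mul_mem (mul_mem hd1 hw) (mul_mem y4 z4)) using 1
      simp [hc]; ring
    · convert add_mem (sub_mem (add_mem (add_mem (mul_mem y1 z2) (mul_mem y2 z1))
        (mul_mem he1 (mul_mem y2 z2))) (mul_mem hw (mul_mem y3 z4)))
        (mul_mem hw (mul_mem y4 z3)) using 1
      simp [hc]; ring
    · convert sub_mem (add_mem (add_mem (add_mem (mul_mem y1 z3) (mul_mem hd1 (mul_mem y2 z4)))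
        (mul_mem y3 z1)) (mul_mem he1 (mul_mem y3 z2))) (mul_mem hd1 (mul_mem y4 z2)) using 1
      simp; ring
    · convert add_mem (sub_mem (add_mem (add_mem (mul_mem y1 z4) (mul_mem y2 z3))
        (mul_mem he1 (mul_mem y2 z4))) (mul_mem y3 z2)) (mul_mem y4 z1) using 1
      simp; ring
  one_mem' := by simp
  zero_mem' := by simp
  add_mem' := by
    rintro y z ⟨y1, y2, y3, y4⟩ ⟨z1, z2, z3, z4⟩
    refine ⟨add_mem y1 z1, add_mem y2 z2, ?_, ?_⟩
    · convert add_mem y3 z3 using 1; simp; ring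
    · convert add_mem y4 z4 using 1; simp; ring
  neg_mem' := by
    rintro y ⟨y1, y2, y3, y4⟩
    refine ⟨neg_mem y1, neg_mem y2, ?_, ?_⟩
    · convert neg_mem y3 using 1; simp
    · convert neg_mem y4 using 1; simp

lemma mem_inertOrder {w σ : ℚ_[p]} {hd1 : d1 ∈ PadicInt.subring p}
    {he1 : e1 ∈ PadicInt.subring p} {hw : w ∈ PadicInt.subring p}
    {hc : c = w * σ ^ 2} {z : ℍ[ℚ_[p], d1, e1, c]} :
    z ∈ inertOrder σ hd1 he1 hw hc ↔ z.re ∈ PadicInt.subring p ∧ z.imI ∈ PadicInt.subring p ∧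
    σ * z.imJ ∈ PadicInt.subring p ∧ σ * z.imK ∈ PadicInt.subring p := Iff.rfl

lemma inertOrder_isOrder {w σ : ℚ_[p]} (hd1 : d1 ∈ PadicInt.subring p)
    (he1 : e1 ∈ PadicInt.subring p) (hw : w ∈ PadicInt.subring p)
    (hc : c = w * σ ^ 2) (hσ : σ ≠ 0) :
    IsOrderP p (inertOrder σ hd1 he1 hw hc : Subring ℍ[ℚ_[p], d1, e1, c]) := by
  have hz : ∀ z : ℍ[ℚ_[p], d1, e1, c], z = z.re • 1 + z.imI • ⟨0, 1, 0, 0⟩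
      + (σ * z.imJ) • ⟨0, 0, σ⁻¹, 0⟩ + (σ * z.imK) • ⟨0, 0, 0, σ⁻¹⟩ := by
    intro z
    ext <;> simp <;> field_simp
  refine isOrderP_of_four 1 ⟨0, 1, 0, 0⟩ ⟨0, 0, σ⁻¹, 0⟩ ⟨0, 0, 0, σ⁻¹⟩ (one_mem _) ?_ ?_ ?_ ?_
    fun z => ⟨_, _, _, _, hz z⟩
  · simp [mem_inertOrder, one_mem, zero_mem]
  · simp [mem_inertOrder, one_mem, zero_mem, hσ]
  · simp [mem_inertOrder, one_mem, zero_mem, hσ]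
  · intro z hzO
    rw [mem_inertOrder] at hzO
    rw [mem_zpSpan_four]
    exact ⟨_, hzO.1, _, hzO.2.1, _, hzO.2.2.1, _, hzO.2.2.2, hz z⟩

/-- Any order containing `i` lies in `R + R (j / σ)`: the trace form of the unramified ring
`R = ℤ_p[i]` is unimodular, and `hK` says that elements of `ℚ_p(i)` whose norm has valuation at
least `-1` are integral. -/
lemma le_inertOrder {w σ : ℚ_[p]} (hd1 : d1 ∈ PadicInt.subring p)
    (he1 : e1 ∈ PadicInt.subring p) (hw : w ∈ PadicInt.subring p)
    (hc : c = w * σ ^ 2) (hwp : ‖(p : ℚ_[p])‖ ≤ ‖w‖) (hD : ‖4 * d1 + e1 ^ 2‖ = 1)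
    (hK : ∀ s t : ℚ_[p], ‖p * (s ^ 2 + e1 * s * t - d1 * t ^ 2)‖ ≤ 1 → ‖s‖ ≤ 1 ∧ ‖t‖ ≤ 1)
    {O : Subring ℍ[ℚ_[p], d1, e1, c]} (hO : IsOrderP p O) (h1 : ⟨0, 1, 0, 0⟩ ∈ O) :
    O ≤ inertOrder σ hd1 he1 hw hc := by
  intro z hz
  have t1 : rtrace z ∈ PadicInt.subring p := (rtrace_rnorm_integral hO hz).1
  have t2 : rtrace (z * ⟨0, 1, 0, 0⟩) ∈ PadicInt.subring p :=
    (rtrace_rnorm_integral hO (mul_mem hz h1)).1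
  have t3 : rnorm z ∈ PadicInt.subring p := (rtrace_rnorm_integral hO hz).2
  have two : (2 : ℚ_[p]) ∈ PadicInt.subring p := ofNat_mem _ 2
  have hre : z.re ∈ PadicInt.subring p := by
    refine mem_of_unit_mul hD ?_
    convert sub_mem (mul_mem (add_mem (mul_mem two hd1) (pow_mem he1 2)) t1) (mul_mem he1 t2) using 1
    simp [rtrace]; ring
  have him : z.imI ∈ PadicInt.subring p := by
    refine mem_of_unit_mul hD ?_
    convert sub_mem (mul_mem two t2) (mul_mem he1 t1) using 1
    simp [rtrace]; ring
  have hn : w * ((σ * z.imJ) ^ 2 + e1 * (σ * z.imJ) * (σ * z.imK) - d1 * (σ * z.imK) ^ 2)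
      ∈ PadicInt.subring p := by
    convert sub_mem (sub_mem (add_mem (pow_mem hre 2) (mul_mem (mul_mem he1 hre) him))
      (mul_mem hd1 (pow_mem him 2))) t3 using 1
    simp [rnorm, hc]; ring
  have := hK (σ * z.imJ) (σ * z.imK) (by
    refine le_trans ?_ (PadicInt.mem_subring_iff p |>.1 hn)
    rw [norm_mul, norm_mul]
    gcongr)
  exact ⟨hre, him, this.1, this.2⟩

/-- Scaling by an even power of `p` brings the valuation of `c` to `0` or `1`. -/
lemma exists_scale (hc0 : c ≠ 0) : ∃ w σ : ℚ_[p], c = w * σ ^ 2 ∧ σ ≠ 0 ∧ ‖w‖ ≤ 1 ∧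
    ‖(p : ℚ_[p])‖ ≤ ‖w‖ := by
  have hp : (p : ℚ_[p]) ≠ 0 := Nat.cast_ne_zero.2 (Fact.out : p.Prime).ne_zero
  have hp1 : (1 : ℝ) < p := by exact_mod_cast (Fact.out : p.Prime).one_lt
  have hσ : (p : ℚ_[p]) ^ (c.valuation / 2) ≠ 0 := zpow_ne_zero _ hp
  have hn : ‖c / ((p : ℚ_[p]) ^ (c.valuation / 2)) ^ 2‖ = (p : ℝ) ^ (-(c.valuation % 2)) := by
    rw [norm_div, norm_pow, Padic.norm_p_zpow, Padic.norm_eq_zpow_neg_valuation hc0,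
      ← zpow_natCast, ← zpow_mul, ← zpow_sub₀ (by positivity)]
    congr 1
    push_cast
    omega
  refine ⟨c / ((p : ℚ_[p]) ^ (c.valuation / 2)) ^ 2, _, ?_, hσ, ?_, ?_⟩
  · field_simp
  · rw [hn, ← zpow_zero (p : ℝ)]
    exact zpow_le_zpow_right₀ hp1.le (by omega)
  · rw [hn, Padic.norm_p, ← zpow_neg_one]
    exact zpow_le_zpow_right₀ hp1.le (by omega)

lemma existsUnique_of_inert (hd1 : d1 ∈ PadicInt.subring p) (he1 : e1 ∈ PadicInt.subring p)
    (hD : ‖4 * d1 + e1 ^ 2‖ = 1) (hc0 : c ≠ 0)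
    (hK : ∀ s t : ℚ_[p], ‖p * (s ^ 2 + e1 * s * t - d1 * t ^ 2)‖ ≤ 1 → ‖s‖ ≤ 1 ∧ ‖t‖ ≤ 1)
    {O : Subring ℍ[ℚ_[p], d1, e1, c]} (hO : IsOrderP p O) (h1 : ⟨0, 1, 0, 0⟩ ∈ O) :
    ∃! M : Subring ℍ[ℚ_[p], d1, e1, c], IsMaximalOrderP p M ∧ O ≤ M := by
  obtain ⟨w, σ, hc, hσ, hw, hwp⟩ := exists_scale hc0
  have hM := inertOrder_isOrder hd1 he1 hw hc hσ
  have hle := fun {O' : Subring ℍ[ℚ_[p], d1, e1, c]} => le_inertOrder hd1 he1 hw hc hwp hD hK (O := O')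
  refine ⟨_, ⟨⟨hM, fun O' hO' hl => le_antisymm (hle hO' (hl (hle hO h1 h1))) hl⟩, hle hO h1⟩, ?_⟩
  rintro M ⟨hMm, hOM⟩
  exact (hMm.2 _ hM (hle hMm.1 (hOM h1))).symm

end Maximality

/-! ### Quadratic polynomials over `ℤ_p` -/

section Arithmetic

variable {p : ℕ} [Fact p.Prime]

lemma int_mem (n : ℤ) : (n : ℚ_[p]) ∈ PadicInt.subring p := intCast_mem _ n

lemma norm_int_eq_one {n : ℤ} (h : ¬ (p : ℤ) ∣ n) : ‖(n : ℚ_[p])‖ = 1 :=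
  le_antisymm (Padic.norm_int_le_one n) (not_lt.1 fun h' => h ((Padic.norm_intCast_lt_one_iff (p := p)).1 h'))

lemma prime_dvd_of_dvd_four_mul (h2 : p ≠ 2) {n : ℤ} (h : (p : ℤ) ∣ 4 * n) : (p : ℤ) ∣ n := by
  have hp : Prime (p : ℤ) := Nat.prime_iff_prime_int.1 Fact.out
  refine (hp.dvd_or_dvd h).resolve_left fun h4 => h2 ?_
  have h4' : p ∣ 2 ^ 2 := by exact_mod_cast h4
  exact (Nat.prime_dvd_prime_iff_eq Fact.out Nat.prime_two).1
    ((Fact.out : p.Prime).dvd_of_dvd_pow h4')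

lemma exists_root_of_kron_one {D d e : ℤ} (hD : D = 4 * d + e ^ 2) (he : e = 0 ∨ e = 1)
    (hk : kron D p = 1) : ∃ a : ℤ, (p : ℤ) ∣ a ^ 2 - e * a - d := by
  unfold kron at hk
  split_ifs at hk with h2 h3 h4 h5 h6
  all_goals try (norm_num at hk; done)
  · subst h2
    refine ⟨0, ?_⟩
    rcases he with rfl | rfl <;> push_cast <;> omega
  · obtain ⟨y, hy⟩ := h6
    have hodd := (Fact.out : p.Prime).eq_two_or_odd.resolve_left h2
    obtain ⟨a, k, hak⟩ : ∃ a k : ℤ, 2 * a - e = y + k * p := by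
      by_cases hye : (y + e) % 2 = 0
      · exact ⟨(y + e) / 2, 0, by omega⟩
      · exact ⟨(y + p + e) / 2, 1, by omega⟩
    refine ⟨a, prime_dvd_of_dvd_four_mul h2 ?_⟩
    have : 4 * (a ^ 2 - e * a - d) = (y ^ 2 - D) + p * (2 * y * k + k ^ 2 * p) := by
      have : 4 * (a ^ 2 - e * a - d) = (2 * a - e) ^ 2 - D := by rw [hD]; ring
      rw [this, hak]; ring
    rw [this]
    exact dvd_add hy (dvd_mul_right _ _)

lemma no_root_of_kron_neg_one {D d e : ℤ} (hD : D = 4 * d + e ^ 2) (he : e = 0 ∨ e = 1)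
    (hk : kron D p = -1) (a : ℤ) : ¬ (p : ℤ) ∣ a ^ 2 - e * a - d := by
  unfold kron at hk
  split_ifs at hk with h2 h3 h4 h5 h6
  · subst h2
    have h1 : e = 1 := by
      rcases he with rfl | rfl
      · omega
      · rfl
    subst h1
    obtain ⟨k, hk⟩ := Int.even_mul_succ_self (a - 1)
    have : a ^ 2 - 1 * a - d = k + k - d := by rw [← hk]; ring
    rw [this]
    push_cast
    omega
  · intro h
    refine h6 ⟨2 * a - e, ?_⟩
    have : (2 * a - e) ^ 2 - D = 4 * (a ^ 2 - e * a - d) := by rw [hD]; ring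
    rw [this]
    exact Dvd.dvd.mul_left h 4

open Polynomial in
/-- Hensel's lemma for `X² - eX - d`, whose discriminant `4d + e²` is a unit. -/
lemma exists_split {D d e : ℤ} (hD : D = 4 * d + e ^ 2) (hpD : ¬ (p : ℤ) ∣ D)
    (h : ∃ a : ℤ, (p : ℤ) ∣ a ^ 2 - e * a - d) :
    ∃ r1 ∈ PadicInt.subring p, ∃ r2 ∈ PadicInt.subring p,
      (d : ℚ_[p]) = -(r1 * r2) ∧ (e : ℚ_[p]) = r1 + r2 ∧ ‖r1 - r2‖ = 1 := by
  obtain ⟨a, ha⟩ := h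
  let F : ℤ_[p][X] := X ^ 2 - C (e : ℤ_[p]) * X - C (d : ℤ_[p])
  have hF : ∀ y : ℤ_[p], F.aeval y = y ^ 2 - e * y - d := by
    intro y; simp [F]
  have hF' : ∀ y : ℤ_[p], F.derivative.aeval y = 2 * y - e := by
    intro y; simp [F, one_add_one_eq_two]
  have hp : Prime (p : ℤ) := Nat.prime_iff_prime_int.1 Fact.out
  have h1 : ‖F.derivative.aeval (a : ℤ_[p])‖ = 1 := by
    rw [hF']
    have hnd : ¬ (p : ℤ) ∣ 2 * a - e := by
      intro hdvd
      apply hpD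
      have : D = (2 * a - e) * (2 * a - e) - 4 * (a ^ 2 - e * a - d) := by rw [hD]; ring
      rw [this]
      exact dvd_sub (Dvd.dvd.mul_left hdvd _) (Dvd.dvd.mul_left ha _)
    have := norm_int_eq_one hnd
    rw [PadicInt.norm_def]
    push_cast at this ⊢
    exact this
  have h0 : ‖F.aeval (a : ℤ_[p])‖ < ‖F.derivative.aeval (a : ℤ_[p])‖ ^ 2 := by
    rw [h1, hF, one_pow]
    have := (PadicInt.norm_int_lt_one_iff_dvd (p := p) (a ^ 2 - e * a - d)).2 ha
    push_cast at this
    exact this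
  obtain ⟨z, hz, -, hz', -⟩ := hensels_lemma h0
  rw [h1, hF', PadicInt.norm_def] at hz'
  rw [hF] at hz
  have hzq : (z : ℚ_[p]) ^ 2 - e * z - d = 0 := congrArg (fun y : ℤ_[p] => (y : ℚ_[p])) hz
  replace hz' : ‖2 * (z : ℚ_[p]) - e‖ = 1 := hz'
  have hzm : (z : ℚ_[p]) ∈ PadicInt.subring p := z.2
  generalize (z : ℚ_[p]) = y at *
  refine ⟨y, hzm, e - y, sub_mem (int_mem e) hzm, ?_, by ring, ?_⟩
  · linear_combination -hzq
  · rw [← hz']; congr 1; ring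

lemma le_norm_of_one_lt {q : ℚ_[p]} (h : 1 < ‖q‖) : (p : ℝ) ≤ ‖q‖ := by
  have hq : q ≠ 0 := by rintro rfl; simp at h; linarith
  have hp1 : (1 : ℝ) < p := by exact_mod_cast (Fact.out : p.Prime).one_lt
  rw [Padic.norm_eq_zpow_neg_valuation hq] at h ⊢
  rw [← zpow_zero (p : ℝ), zpow_lt_zpow_iff_right₀ hp1] at h
  calc (p : ℝ) = (p : ℝ) ^ (1 : ℤ) := (zpow_one _).symm
    _ ≤ _ := zpow_le_zpow_right₀ hp1.le (by omega)

/-- `X² + eX - d` takes unit values on `ℤ_p`: its roots mod `p` are the negatives of those of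
`X² - eX - d`. -/
lemma norm_form_eq_one {d e : ℤ} (h : ∀ a : ℤ, ¬ (p : ℤ) ∣ a ^ 2 - e * a - d) {u : ℚ_[p]}
    (hu : ‖u‖ ≤ 1) : ‖u ^ 2 + e * u - d‖ = 1 := by
  let U : ℤ_[p] := ⟨u, hu⟩
  have hU : ‖U ^ 2 + e * U - d‖ = ‖u ^ 2 + e * u - d‖ := by
    rw [PadicInt.norm_def]; push_cast; rfl
  rw [← hU]
  refine le_antisymm (PadicInt.norm_le_one _) (not_lt.1 fun hlt => ?_)
  rw [← PadicInt.mem_nonunits, ← IsLocalRing.mem_maximalIdeal, ← PadicInt.ker_toZMod,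
    RingHom.mem_ker] at hlt
  obtain ⟨b, hb⟩ := ZMod.intCast_surjective (PadicInt.toZMod U)
  apply h (-b)
  rw [← ZMod.intCast_zmod_eq_zero_iff_dvd, ← hlt]
  push_cast
  simp [hb]

/-- If `X² - eX - d` has no root mod `p`, its norm form is anisotropic mod `p`, so it only takes
values of even valuation, and values in `p⁻¹ℤ_p` only at integral vectors. -/
lemma integral_of_norm_form {d e : ℤ} (h : ∀ a : ℤ, ¬ (p : ℤ) ∣ a ^ 2 - e * a - d)
    (s t : ℚ_[p]) (hst : ‖(p : ℚ_[p]) * (s ^ 2 + e * s * t - d * t ^ 2)‖ ≤ 1) :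
    ‖s‖ ≤ 1 ∧ ‖t‖ ≤ 1 := by
  have hp1 : (1 : ℝ) < p := by exact_mod_cast (Fact.out : p.Prime).one_lt
  have key : ∀ r u : ℚ_[p], s ^ 2 + e * s * t - d * t ^ 2 = r ^ 2 * u → ‖u‖ = 1 → ‖r‖ ≤ 1 := by
    intro r u hru hu
    by_contra! hr
    have h1 := le_norm_of_one_lt hr
    rw [hru, norm_mul, norm_mul, norm_pow, hu, Padic.norm_p, mul_one, inv_mul_le_iff₀ (by linarith)]
      at hst
    nlinarith
  rcases le_or_gt ‖s‖ ‖t‖ with hle | hlt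
  · by_cases ht : t = 0
    · subst ht; simp at hle; subst hle; simp
    have := key t ((s / t) ^ 2 + e * (s / t) - d) (by field_simp)
      (norm_form_eq_one h (by rw [norm_div]; exact div_le_one_of_le₀ hle (norm_nonneg _)))
    exact ⟨hle.trans this, this⟩
  · have hs : s ≠ 0 := by rintro rfl; simp at hlt; linarith [norm_nonneg t]
    have hu : ‖t / s‖ < 1 := by
      rw [norm_div, div_lt_one (norm_pos_iff.2 hs)]; exact hlt
    have := key s (1 + (t / s) * (e - d * (t / s))) (by field_simp; ring) (by
      have h2 : ‖(e : ℚ_[p]) - d * (t / s)‖ ≤ 1 :=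
        sub_mem (int_mem e) (mul_mem (int_mem d) (show t / s ∈ PadicInt.subring p from hu.le))
      have h3 : ‖t / s * ((e : ℚ_[p]) - d * (t / s))‖ < 1 := by
        rw [norm_mul]
        nlinarith [norm_nonneg (t / s), norm_nonneg ((e : ℚ_[p]) - d * (t / s))]
      rw [Padic.add_eq_max_of_ne, norm_one, max_eq_left h3.le]
      rw [norm_one]; exact h3.ne')
    exact ⟨this, hlt.le.trans this⟩

end Arithmetic

/-! ### The order attached to a pair -/

section Core

variable {p : ℕ} [Fact p.Prime] {B : Type*} [Ring B] [Algebra ℚ_[p] B]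

lemma PairRel.of_algEquiv {B' : Type*} [Ring B'] [Algebra ℚ_[p] B'] (φ : B' ≃ₐ[ℚ_[p]] B)
    {v1 v2 : B'} {e1 d1 e2 d2 m : ℚ_[p]} (h : PairRel (φ v1) (φ v2) e1 d1 e2 d2 m) :
    PairRel v1 v2 e1 d1 e2 d2 m where
  r11 := φ.injective (by simpa using h.r11)
  r22 := φ.injective (by simpa using h.r22)
  r21 := φ.injective (by simpa using h.r21)

/-- The statement for `v₁, v₂` with integral structure constants, relative to `j = 1`; here
`N = (D₁D₂ - x²)/4` is, up to sign, the reduced discriminant of the order. -/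
lemma exists_order (hB : Module.finrank ℚ_[p] B = 4) {v1 v2 : B} {D e1 d1 e2 d2 m N : ℤ}
    (h : PairRel v1 v2 (e1 : ℚ_[p]) d1 e2 d2 m) (hDe : D = 4 * d1 + e1 ^ 2) (hD0 : D ≠ 0)
    (he1 : e1 = 0 ∨ e1 = 1)
    (hNe : N = 4 * d1 * d2 + d1 * e2 ^ 2 + d2 * e1 ^ 2 - m ^ 2 - m * e1 * e2) (hN0 : N ≠ 0) :
    ∃ O : Subring B, (O : Set B) = ZpSpan p [1, v1, v2, v1 * v2] ∧ IsOrderP p O ∧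
      (¬ (p : ℤ) ∣ N → IsMaximalOrderP p O) ∧
      (¬ (p : ℤ) ∣ D →
        (kron D p = -1 → ∃! M : Subring B, IsMaximalOrderP p M ∧ O ≤ M) ∧
        (kron D p = 1 → IsEichlerOrderP p O)) := by
  have hDq : (4 * d1 + e1 ^ 2 : ℚ_[p]) = D := by rw [hDe]; push_cast; ring
  have hDq0 : (D : ℚ_[p]) ≠ 0 := by exact_mod_cast hD0
  have hNq : (N : ℚ_[p]) = 4 * d1 * d2 + d1 * e2 ^ 2 + d2 * e1 ^ 2 - m ^ 2 - m * e1 * e2 := by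
    rw [hNe]; push_cast; ring
  have hNq0 : (N : ℚ_[p]) ≠ 0 := by exact_mod_cast hN0
  -- `r + s v₁` is the orthogonal projection of `v₂` to `ℚ_p(v₁)`
  obtain ⟨r, hr⟩ : ∃ r : ℚ_[p], r = (2 * d1 * e2 - e1 * m) / D := ⟨_, rfl⟩
  obtain ⟨s, hs⟩ : ∃ s : ℚ_[p], s = (2 * m + e1 * e2) / D := ⟨_, rfl⟩
  obtain ⟨c, hc⟩ : ∃ c : ℚ_[p], c = N / D := ⟨_, rfl⟩
  have hc0 : c ≠ 0 := by rw [hc]; exact div_ne_zero hNq0 hDq0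
  have hDc : (4 * d1 + e1 ^ 2 : ℚ_[p]) * c = N := by rw [hDq, hc]; field_simp
  obtain ⟨φ, hφ1, hφ2⟩ := exists_model hB h (r := r) (s := s) (c := c)
    (by rw [hr, hs]; field_simp; rw [← hDq]; ring)
    (by rw [hr, hs]; field_simp; rw [← hDq]; ring)
    (by rw [hr, hs, hc, hNq]; field_simp; rw [← hDq]; ring)
    (by rwa [hDq]) hc0
  have h' : PairRel (⟨0, 1, 0, 0⟩ : ℍ[ℚ_[p], d1, e1, c]) ⟨r, s, 1, 0⟩ (e1 : ℚ_[p]) d1 e2 d2 m :=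
    PairRel.of_algEquiv φ (by rwa [hφ1, hφ2])
  have hφO : pairOrder h (int_mem _) (int_mem _) (int_mem _) (int_mem _) (int_mem _)
      = mapO φ (pairOrder h' (int_mem _) (int_mem _) (int_mem _) (int_mem _) (int_mem _)) := by
    apply SetLike.coe_injective
    rw [coe_mapO, pairOrder_coe, pairOrder_coe, ← zpSpan_map]
    simp only [List.map_cons, List.map_nil, map_one, map_mul, hφ1, hφ2]
  refine ⟨_, pairOrder_coe h (int_mem _) (int_mem _) (int_mem _) (int_mem _) (int_mem _), ?_⟩
  rw [hφO]
  generalize hO' : pairOrder h' (int_mem _) (int_mem _) (int_mem _) (int_mem _) (int_mem _) = O'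
  have hcoe : ∀ z, z ∈ O' ↔ z ∈ ZpSpan p [1, ⟨0, 1, 0, 0⟩, ⟨r, s, 1, 0⟩,
      (⟨0, 1, 0, 0⟩ : ℍ[ℚ_[p], d1, e1, c]) * ⟨r, s, 1, 0⟩] := by
    intro z
    rw [← SetLike.mem_coe, ← hO', pairOrder_coe]
  have hv1 : (⟨0, 1, 0, 0⟩ : ℍ[ℚ_[p], d1, e1, c]) ∈ O' := by
    rw [← hO']
    exact ⟨0, zero_mem _, 1, one_mem _, 0, zero_mem _, 0, zero_mem _, v1_eq_combo⟩
  have hv2 : (⟨r, s, 1, 0⟩ : ℍ[ℚ_[p], d1, e1, c]) ∈ O' := by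
    rw [← hO']
    exact ⟨0, zero_mem _, 0, zero_mem _, 1, one_mem _, 0, zero_mem _, v2_eq_combo⟩
  have hord : IsOrderP p O' := isOrderP_of_four 1 _ _ _ (one_mem _) hv1 hv2 (mul_mem hv1 hv2)
    (fun z hz => (hcoe z).1 hz) fun z => ⟨_, _, _, _, eq_combo_model r s z⟩
  refine ⟨hord.mapO φ, fun hpN => IsMaximalOrderP.mapO φ ⟨hord, fun O'' hO'' hle => ?_⟩,
    fun hpD => ?_⟩
  · refine le_antisymm (fun z hz => (hcoe z).2 ?_) hle
    exact mem_zpSpan_of_unit_disc h' (int_mem _) (int_mem _) (int_mem _)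
      (by rw [hDc]; exact norm_int_eq_one hpN) hO'' (hle hv1) (hle hv2) hz
  have hDn : ‖(4 * d1 + e1 ^ 2 : ℚ_[p])‖ = 1 := by rw [hDq]; exact norm_int_eq_one hpD
  constructor
  · intro hk
    exact existsUnique_maximal_mapO φ (existsUnique_of_inert (int_mem _) (int_mem _) hDn hc0
      (integral_of_norm_form (no_root_of_kron_neg_one hDe he1 hk)) hord hv1)
  · intro hk
    obtain ⟨r1, hr1, r2, hr2, hd, he, hrr⟩ :=
      exists_split hDe hpD (exists_root_of_kron_one hDe he1 hk)
    have hdiv : ∀ n : ℤ, (n : ℚ_[p]) / D ∈ PadicInt.subring p := fun n => by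
      rw [div_eq_mul_inv]
      exact mul_mem (int_mem n) (inv_mem_of_unit (norm_int_eq_one hpD))
    have hrm : r ∈ PadicInt.subring p := by
      rw [hr]; exact_mod_cast hdiv (2 * d1 * e2 - e1 * m)
    have hsm : s ∈ PadicInt.subring p := by
      rw [hs]; exact_mod_cast hdiv (2 * m + e1 * e2)
    refine IsEichlerOrderP.mapO φ (eichler_of_split hd he hr1 hr2 hrr (hc ▸ hdiv N) hc0
      fun z => ?_)
    rw [hcoe, mem_zpSpan_four]
    constructor
    · rintro ⟨a, ha, b, hb, x, hx, y, hy, rfl⟩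
      refine ⟨?_, ?_, ?_, ?_⟩
      · convert add_mem (add_mem ha (mul_mem hx hrm)) (mul_mem hy (mul_mem (int_mem d1) hsm))
          using 1
        simp
      · convert add_mem (add_mem hb (mul_mem hx hsm)) (mul_mem hy (add_mem hrm
          (mul_mem (int_mem e1) hsm))) using 1
        simp
      · simpa using hx
      · simpa using hy
    · rintro ⟨z1, z2, z3, z4⟩
      exact ⟨_, sub_mem (sub_mem z1 (mul_mem hrm z3)) (mul_mem (mul_mem hsm (int_mem d1)) z4), _,
        sub_mem (sub_mem z2 (mul_mem hsm z3)) (mul_mem (add_mem hrm (mul_mem hsm (int_mem e1))) z4),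
        _, z3, _, z4, eq_combo_model r s z⟩

end Core

/-! ### Relations satisfied by `v₁` and `v₂` -/

section Assembly

variable {p : ℕ} [Fact p.Prime] {B : Type*} [Ring B] [Algebra ℚ_[p] B]

lemma PairRel.swap {v1 v2 : B} {e1 d1 e2 d2 m : ℚ_[p]} (h : PairRel v1 v2 e1 d1 e2 d2 m) :
    PairRel v2 v1 e2 d2 e1 d1 m where
  r11 := h.r22
  r22 := h.r11
  r21 := by rw [h.r21]; module

lemma PairRel.zpSpan_swap {v1 v2 : B} {e1 d1 e2 d2 m : ℤ}
    (h : PairRel v1 v2 (e1 : ℚ_[p]) d1 e2 d2 m) :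
    ZpSpan p [1, v2, v1, v2 * v1] = ZpSpan p [1, v1, v2, v1 * v2] := by
  have key : ∀ {v1 v2 : B} {e1 d1 e2 d2 m : ℤ}, PairRel v1 v2 (e1 : ℚ_[p]) d1 e2 d2 m →
      ZpSpan p [1, v2, v1, v2 * v1] ⊆ ZpSpan p [1, v1, v2, v1 * v2] := by
    intro v1 v2 e1 d1 e2 d2 m h z hz
    rw [mem_zpSpan_four] at hz ⊢
    obtain ⟨a, ha, b, hb, c, hc, d, hd, rfl⟩ := hz
    refine ⟨a + d * m, add_mem ha (mul_mem hd (int_mem m)), c + d * e2,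
      add_mem hc (mul_mem hd (int_mem e2)), b + d * e1, add_mem hb (mul_mem hd (int_mem e1)),
      -d, neg_mem hd, ?_⟩
    rw [h.r21]
    module
  exact (key h).antisymm (key h.swap)

lemma pairRel_of_sq {D1 D2 x e1 d1 e2 d2 m : ℤ} (hD1 : D1 = 4 * d1 + e1 ^ 2)
    (hD2 : D2 = 4 * d2 + e2 ^ 2) (hx : x = 2 * m + e1 * e2) {w1 w2 v1 v2 : B}
    (hw1sq : w1 ^ 2 = algebraMap ℚ_[p] B ((D1 : ℤ) : ℚ_[p]))
    (hw2sq : w2 ^ 2 = algebraMap ℚ_[p] B ((D2 : ℤ) : ℚ_[p]))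
    (hlink : w1 * w2 + w2 * w1 = algebraMap ℚ_[p] B ((2 * x : ℤ) : ℚ_[p]))
    (hv1 : v1 = (2 : ℚ_[p])⁻¹ • (algebraMap ℚ_[p] B (e1 : ℚ_[p]) + w1))
    (hv2 : v2 = (2 : ℚ_[p])⁻¹ • (algebraMap ℚ_[p] B (e2 : ℚ_[p]) + w2)) :
    PairRel v1 v2 (e1 : ℚ_[p]) d1 e2 d2 m := by
  have two : (2 : ℚ_[p]) ≠ 0 := two_ne_zero
  rw [Algebra.algebraMap_eq_smul_one] at hw1sq hw2sq hlink hv1 hv2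
  have hl : w2 * w1 = ((2 * x : ℤ) : ℚ_[p]) • (1 : B) - w1 * w2 := by
    rw [← hlink]; abel
  rw [pow_two] at hw1sq hw2sq
  subst hv1 hv2 hD1 hD2 hx
  constructor
  · simp only [add_mul, mul_add, smul_mul_assoc, mul_smul_comm, one_mul, mul_one, smul_add,
      smul_smul, hw1sq]
    push_cast
    match_scalars <;> field_simp <;> ring
  · simp only [add_mul, mul_add, smul_mul_assoc, mul_smul_comm, one_mul, mul_one, smul_add,
      smul_smul, hw2sq]
    push_cast
    match_scalars <;> field_simp <;> ring
  · simp only [add_mul, mul_add, smul_mul_assoc, mul_smul_comm, one_mul, mul_one, smul_add,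
      smul_smul, hl]
    push_cast
    match_scalars <;> field_simp <;> ring

end Assembly

/-- Let `(D1, D2, x)` be an admissible triple and `p` a prime with
`p ∤ gcd(D1, D2, D1·D2 − x²)` (`p` is nice). Let `B` be a quaternion algebra over `ℚ_p`
containing elements `w1, w2 ∉ ℚ_p·1` with `wᵢ² = Dᵢ·1` and `trd(w1·w2) = 2x` (i.e.
`w1·w2 + w2·w1 = 2x·1`), set `vᵢ = (p_{Dᵢ}·1 + wᵢ)/2`, and let `O` be the `ℤ_p`-submodule of
`B` spanned by `{1, v1, v2, v1·v2}`. Then `O` is an order of `B`, and: (i) if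
`p ∤ (D1·D2 − x²)/4`, then `O` is a maximal order; otherwise, choosing `j ∈ {1,2}` with
`p ∤ D_j` (such `j` exists), (ii) if `(D_j/p) = −1` then `O` is contained in exactly one
maximal order of `B`, and (iii) if `(D_j/p) = 1` then `O` is an Eichler order of `B`. -/
theorem stmt13 (p : ℕ) [Fact p.Prime] {B : Type*} [Ring B] [Algebra ℚ_[p] B]
    (hB : IsQuaternionAlgebra ℚ_[p] B)
    (D1 D2 x : ℤ) (hadm : Admissible D1 D2 x)
    (hnice : ¬ ((p : ℤ) ∣ D1 ∧ (p : ℤ) ∣ D2 ∧ (p : ℤ) ∣ (D1 * D2 - x ^ 2)))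
    (w1 w2 : B)
    (hw1ns : w1 ∉ Set.range (algebraMap ℚ_[p] B))
    (hw2ns : w2 ∉ Set.range (algebraMap ℚ_[p] B))
    (hw1sq : w1 ^ 2 = algebraMap ℚ_[p] B ((D1 : ℤ) : ℚ_[p]))
    (hw2sq : w2 ^ 2 = algebraMap ℚ_[p] B ((D2 : ℤ) : ℚ_[p]))
    (hlink : w1 * w2 + w2 * w1 = algebraMap ℚ_[p] B ((2 * x : ℤ) : ℚ_[p]))
    (v1 v2 : B)
    (hv1 : v1 = (2 : ℚ_[p])⁻¹ • (algebraMap ℚ_[p] B ((D1 % 2 : ℤ) : ℚ_[p]) + w1))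
    (hv2 : v2 = (2 : ℚ_[p])⁻¹ • (algebraMap ℚ_[p] B ((D2 % 2 : ℤ) : ℚ_[p]) + w2)) :
    ∃ O : Subring B,
      (O : Set B) = ZpSpan p [1, v1, v2, v1 * v2] ∧
      IsOrderP p O ∧
      (¬ ((p : ℤ) ∣ (D1 * D2 - x ^ 2) / 4) → IsMaximalOrderP p O) ∧
      ((p : ℤ) ∣ (D1 * D2 - x ^ 2) / 4 →
        (¬ ((p : ℤ) ∣ D1) ∨ ¬ ((p : ℤ) ∣ D2)) ∧
        ∀ Dj : ℤ, (Dj = D1 ∨ Dj = D2) → ¬ ((p : ℤ) ∣ Dj) →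
          (kron Dj p = -1 → ∃! M : Subring B, IsMaximalOrderP p M ∧ O ≤ M) ∧
          (kron Dj p = 1 → IsEichlerOrderP p O)) := by

  obtain ⟨hD1pos, hD2pos, hD1m, hD2m, hxm, hne⟩ := hadm
  have hfr : Module.finrank ℚ_[p] B = 4 := by
    obtain ⟨a, b, -, -, ⟨f⟩⟩ := hB
    rw [f.toLinearEquiv.finrank_eq, QuaternionAlgebra.finrank_eq_four]
  obtain ⟨e1, he1⟩ : ∃ e, e = D1 % 2 := ⟨_, rfl⟩
  obtain ⟨e2, he2⟩ : ∃ e, e = D2 % 2 := ⟨_, rfl⟩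
  rw [← he1] at hv1
  rw [← he2] at hv2
  have he1' : e1 = 0 ∨ e1 = 1 := by omega
  have he2' : e2 = 0 ∨ e2 = 1 := by omega
  obtain ⟨d1, hd1⟩ : ∃ d1, D1 = 4 * d1 + e1 ^ 2 := ⟨D1 / 4, by
    rcases he1' with h | h <;> rw [h] at he1 ⊢ <;> omega⟩
  obtain ⟨d2, hd2⟩ : ∃ d2, D2 = 4 * d2 + e2 ^ 2 := ⟨D2 / 4, by
    rcases he2' with h | h <;> rw [h] at he2 ⊢ <;> omega⟩
  obtain ⟨m, hm⟩ : ∃ m, x = 2 * m + e1 * e2 := by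
    have : x % 2 = (e1 * e2) % 2 := by rw [hxm, he1, he2, ← Int.mul_emod]
    exact ⟨x / 2 - (e1 * e2) / 2, by omega⟩
  obtain ⟨N, hN⟩ : ∃ N, N = 4 * d1 * d2 + d1 * e2 ^ 2 + d2 * e1 ^ 2 - m ^ 2 - m * e1 * e2 :=
    ⟨_, rfl⟩
  have h4N : D1 * D2 - x ^ 2 = 4 * N := by rw [hd1, hd2, hm, hN]; ring
  have hN4 : (D1 * D2 - x ^ 2) / 4 = N := by rw [h4N]; omega
  have hN0 : N ≠ 0 := by
    rintro rfl
    apply hne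
    linarith
  have hrel := pairRel_of_sq hd1 hd2 hm hw1sq hw2sq hlink hv1 hv2
  obtain ⟨O, hO, hord, hmax, h1⟩ := exists_order hfr hrel hd1 hD1pos.ne' he1' hN hN0
  obtain ⟨O', hO', -, -, h2⟩ := exists_order hfr hrel.swap hd2 hD2pos.ne' he2'
    (N := N) (by rw [hN]; ring) hN0
  obtain rfl : O' = O := SetLike.coe_injective (by rw [hO, hO', hrel.zpSpan_swap])
  rw [hN4]
  refine ⟨O', hO, hord, hmax, fun hpN => ⟨?_, ?_⟩⟩
  · by_contra! hcon
    exact hnice ⟨hcon.1, hcon.2, h4N ▸ Dvd.dvd.mul_left hpN 4⟩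
  · rintro Dj (rfl | rfl) hj
    exacts [h1 hj, h2 hj]
end

section
/- Let B be a quaternion algebra over ℚ, D1 and D2 discriminants, and w1, w2 ∈ B with w_i ∉ ℚ·1 and w_i² = D_i·1. Assume x := ½·trd(w1·w2) is an integer with x ≡ D1·D2 (mod 2) and x² ≠ D1·D2. Set v_i = (p_{D_i}·1 + w_i)/2. Then the ℤ-submodule O of B spanned by {1, v1, v2, v1·v2} is an order of B, free of rank 4 with basis (1, v1, v2, v1·v2); it is the smallest order of B containing v1 and v2; the determinant det(trd(α_r·α_s))_{r,s} computed on this basis equals −(D1·D2 − x²)²/16; and hence discrd(O) = |D1·D2 − x²|/4. -/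
/-!
The elements `v1, v2` satisfy relations with *integer* coefficients
`v1² = p1 v1 + c1`, `v2² = p2 v2 + c2`, `v2 v1 = -v1 v2 + p2 v1 + p1 v2 + n`,
where `cᵢ = (Dᵢ - pᵢ)/4` and `n = (x - p1 p2)/2`; integrality is exactly what the congruences on
`D1, D2, x` provide. Consequently left multiplication by `v1` and by `v2` preserves the lattice
spanned by `1, v1, v2, v1 v2`, so this lattice is the subring generated by `v1` and `v2`
(`closure_eq_span`), which gives minimality at once.

A non-scalar element with scalar square has trace zero (`re_eq_zero_of_sq`), so the reduced traces
of all products of the four generators follow from the relations, and the Gram determinant is the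
determinant of an explicit matrix (`gram_det`). It is nonzero because `x² ≠ D1 D2`; hence the four
elements are linearly independent over `ℚ` (`linearIndependent_of_gram`), and they span `B` since
`dim B = 4`.
-/


open Quaternion

/-- An order of a quaternion algebra `B` over `ℚ`: a unital subring of `B` that is finitely
generated as a `ℤ`-module and contains a basis of `B` over `ℚ` (equivalently, spans `B`
over `ℚ`). -/
def IsOrder {B : Type*} [Ring B] [Algebra ℚ B] (O : Subring B) : Prop :=
  (AddSubgroup.toIntSubmodule O.toAddSubgroup).FG ∧
    Submodule.span ℚ (O : Set B) = ⊤

/-- The reduced trace on `ℍ[ℚ, a, b]`: `trd(α) = α + ᾱ = 2·re(α)`. -/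
def trd {a b : ℚ} (α : ℍ[ℚ, a, b]) : ℚ := 2 * α.re

/-- Left multiplication by `v1` and by `v2` preserves the span of `1, v1, v2, v1 v2`; therefore so
does left multiplication by any element of the subring they generate. -/
theorem closure_eq_span {R : Type*} [Ring R] (v1 v2 : R) (p1 p2 c1 c2 n : ℤ)
    (h1 : v1 * v1 = p1 • v1 + c1 • 1) (h2 : v2 * v2 = p2 • v2 + c2 • 1)
    (h21 : v2 * v1 = -(v1 * v2) + p2 • v1 + p1 • v2 + n • 1) :
    (Subring.closure {v1, v2} : Set R) = (Submodule.span ℤ ({1, v1, v2, v1 * v2} : Set R)) := by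
  set M := Submodule.span ℤ ({1, v1, v2, v1 * v2} : Set R) with hM
  have m0 : (1 : R) ∈ M := Submodule.subset_span (by simp)
  have m1 : v1 ∈ M := Submodule.subset_span (by simp)
  have m2 : v2 ∈ M := Submodule.subset_span (by simp)
  have m3 : v1 * v2 ∈ M := Submodule.subset_span (by simp)
  have e1 : v1 * (v1 * v2) = p1 • (v1 * v2) + c1 • v2 := by
    rw [← mul_assoc, h1, add_mul, smul_mul_assoc, smul_mul_assoc, one_mul]
  have e2 : v2 * (v1 * v2) = -(p2 • (v1 * v2) + c2 • v1) + p2 • (v1 * v2)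
      + p1 • (p2 • v2 + c2 • 1) + n • v2 := by
    rw [← mul_assoc, h21]
    simp only [add_mul, neg_mul, smul_mul_assoc, one_mul, mul_assoc, h2, mul_add, mul_smul_comm,
      mul_one]
  have hsm : ∀ (k : ℤ) {y : R}, y ∈ M → k • y ∈ M := fun k _ hy => M.smul_mem k hy
  have key : ∀ v : R, (∀ s ∈ ({1, v1, v2, v1 * v2} : Set R), v * s ∈ M) →
      ∀ m ∈ M, v * m ∈ M := by
    intro v hv m hm
    induction hm using Submodule.span_induction with
    | mem s hs => exact hv s hs
    | zero => simp
    | add y z _ _ hy hz => rw [mul_add]; exact M.add_mem hy hz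
    | smul k y _ hy => rw [mul_smul_comm]; exact hsm k hy
  have k1 : ∀ m ∈ M, v1 * m ∈ M := by
    apply key
    rintro s (rfl | rfl | rfl | rfl)
    · simpa using m1
    · rw [h1]; exact M.add_mem (hsm _ m1) (hsm _ m0)
    · exact m3
    · rw [e1]; exact M.add_mem (hsm _ m3) (hsm _ m2)
  have k2 : ∀ m ∈ M, v2 * m ∈ M := by
    apply key
    rintro s (rfl | rfl | rfl | rfl)
    · simpa using m2
    · rw [h21]
      exact M.add_mem (M.add_mem (M.add_mem (M.neg_mem m3) (hsm _ m1)) (hsm _ m2)) (hsm _ m0)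
    · rw [h2]; exact M.add_mem (hsm _ m2) (hsm _ m0)
    · rw [e2]
      exact M.add_mem (M.add_mem (M.add_mem (M.neg_mem (M.add_mem (hsm _ m3) (hsm _ m1)))
        (hsm _ m3)) (hsm _ (M.add_mem (hsm _ m2) (hsm _ m0)))) (hsm _ m2)
  apply Set.Subset.antisymm
  · intro y hy
    have hyM : ∀ m ∈ M, y * m ∈ M := by
      induction hy using Subring.closure_induction with
      | mem s hs =>
        rcases hs with rfl | rfl
        · exact k1
        · exact k2
      | zero => intro m _; simp
      | one => intro m hm; simpa using hm
      | add y z _ _ hy hz => intro m hm; rw [add_mul]; exact M.add_mem (hy m hm) (hz m hm)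
      | neg y _ hy => intro m hm; rw [neg_mul]; exact M.neg_mem (hy m hm)
      | mul y z _ _ hy hz => intro m hm; rw [mul_assoc]; exact hy _ (hz m hm)
    simpa using hyM 1 m0
  · intro y hy
    have g1 : v1 ∈ Subring.closure {v1, v2} := Subring.subset_closure (by simp)
    have g2 : v2 ∈ Subring.closure {v1, v2} := Subring.subset_closure (by simp)
    change y ∈ M at hy
    change y ∈ Subring.closure {v1, v2}
    induction hy using Submodule.span_induction with
    | mem s hs =>
      rcases hs with rfl | rfl | rfl | rfl
      · exact one_mem _
      · exact g1
      · exact g2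
      · exact mul_mem g1 g2
    | zero => exact zero_mem _
    | add y z _ _ hy hz => exact add_mem hy hz
    | smul k y _ hy => exact zsmul_mem hy k

/-- A non-scalar element whose square is scalar has trace zero: the imaginary coordinates of `w²`
are `2 re(w)` times those of `w`. -/
theorem re_eq_zero_of_sq {a b : ℚ} (w : ℍ[ℚ, a, b]) (d : ℚ)
    (hns : w ∉ Set.range (algebraMap ℚ ℍ[ℚ, a, b]))
    (hsq : w ^ 2 = algebraMap ℚ ℍ[ℚ, a, b] d) : w.re = 0 := by
  by_contra h
  apply hns
  rw [sq] at hsq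
  have hi := congrArg QuaternionAlgebra.imI hsq
  have hj := congrArg QuaternionAlgebra.imJ hsq
  have hk := congrArg QuaternionAlgebra.imK hsq
  simp [QuaternionAlgebra.algebraMap_eq] at hi hj hk
  refine ⟨w.re, ?_⟩
  ext
  · simp [QuaternionAlgebra.algebraMap_eq]
  · simp only [QuaternionAlgebra.algebraMap_eq]
    apply mul_left_cancel₀ h; linarith
  · simp only [QuaternionAlgebra.algebraMap_eq]
    apply mul_left_cancel₀ h; linarith
  · simp only [QuaternionAlgebra.algebraMap_eq]
    apply mul_left_cancel₀ h; linarith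

/-- Nondegeneracy of the Gram matrix of the trace form forces linear independence. -/
theorem linearIndependent_of_gram {a b : ℚ} (α : Fin 4 → ℍ[ℚ, a, b])
    (h : Matrix.det (Matrix.of fun r s : Fin 4 => trd (α r * α s)) ≠ 0) :
    LinearIndependent ℚ α := by
  rw [Fintype.linearIndependent_iff]
  intro g hg
  have : g = 0 := by
    apply Matrix.eq_zero_of_mulVec_eq_zero h
    funext r
    have h2 : trd (α r * ∑ s, g s • α s) = 0 := by rw [hg]; simp [trd]
    simp only [Fin.sum_univ_four, mul_add, mul_smul_comm, trd, QuaternionAlgebra.re_add,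
      QuaternionAlgebra.re_smul, smul_eq_mul] at h2
    simp only [Matrix.mulVec, dotProduct, Fin.sum_univ_four, Matrix.of_apply, trd, Pi.zero_apply]
    linarith
  intro i; rw [this]; rfl

/-- The Gram determinant in terms of the structure constants of the relations. Here
`pᵢ² + 4 cᵢ` is the discriminant of `vᵢ`, and `2 n + p1 p2` is half the trace of
`(2 v1 - p1) (2 v2 - p2)`. -/
theorem gram_det {a b : ℚ} (v1 v2 : ℍ[ℚ, a, b]) (p1 p2 c1 c2 n : ℤ)
    (h1 : v1 * v1 = p1 • v1 + c1 • 1) (h2 : v2 * v2 = p2 • v2 + c2 • 1)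
    (h21 : v2 * v1 = -(v1 * v2) + p2 • v1 + p1 • v2 + n • 1)
    (t1 : 2 * v1.re = p1) (t2 : 2 * v2.re = p2) :
    Matrix.det (Matrix.of fun r s : Fin 4 =>
          trd (![(1 : ℍ[ℚ, a, b]), v1, v2, v1 * v2] r *
            ![(1 : ℍ[ℚ, a, b]), v1, v2, v1 * v2] s)) =
      - ((p1 ^ 2 + 4 * c1) * (p2 ^ 2 + 4 * c2) - (2 * n + p1 * p2) ^ 2 : ℚ) ^ 2 / 16 := by
  -- Each entry is reduced, via the relations and cyclicity of the trace, to the traces of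
  -- `v1`, `v2` and `v1 * v2`.
  have hcomm : (v2 * v1).re = (v1 * v2).re := by simp; ring
  have r21 := congrArg QuaternionAlgebra.re h21
  have r11 := congrArg QuaternionAlgebra.re h1
  have r22 := congrArg QuaternionAlgebra.re h2
  have e113 : v1 * (v1 * v2) = p1 • (v1 * v2) + c1 • v2 := by
    rw [← mul_assoc, h1, add_mul, smul_mul_assoc, smul_mul_assoc, one_mul]
  have e322 : v1 * v2 * v2 = p2 • (v1 * v2) + c2 • v1 := by
    rw [mul_assoc, h2, mul_add, mul_smul_comm, mul_smul_comm, mul_one]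
  have e33 : v1 * v2 * (v1 * v2) = -(p1 • (p2 • (v1 * v2) + c2 • v1) + c1 • (p2 • v2 + c2 • 1))
      + p2 • (p1 • (v1 * v2) + c1 • v2) + p1 • (p2 • (v1 * v2) + c2 • v1) + n • (v1 * v2) := by
    have : v1 * v2 * (v1 * v2) = v1 * (v2 * v1) * v2 := by noncomm_ring
    rw [this, h21]
    simp only [mul_add, add_mul, mul_neg, neg_mul, smul_mul_assoc, mul_smul_comm, mul_one, e113,
      e322, h2, smul_add]
    rw [mul_assoc v1 v1 v2, e113, smul_add]
  have f131 : (v1 * v2 * v1).re = (v1 * (v1 * v2)).re := by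
    simp; ring
  have f232 : (v2 * (v1 * v2)).re = (v1 * v2 * v2).re := by
    simp; ring
  have r113 := congrArg QuaternionAlgebra.re e113
  have r322 := congrArg QuaternionAlgebra.re e322
  have r33 := congrArg QuaternionAlgebra.re e33
  have o : (1 : ℍ[ℚ, a, b]).re = 1 := rfl
  simp only [QuaternionAlgebra.re_add, QuaternionAlgebra.re_neg, QuaternionAlgebra.re_smul,
    o] at r21 r11 r22 r113 r322 r33
  simp only [zsmul_eq_mul, mul_one] at r21 r11 r22 r113 r322 r33
  have s1 : v1.re = p1 / 2 := by linarith
  have s2 : v2.re = p2 / 2 := by linarith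
  have s3 : (v1 * v2).re = (n + p1 * p2) / 2 := by
    rw [hcomm, s1, s2] at r21; linarith
  rw [s1] at r11
  rw [s2] at r22
  rw [s2, s3] at r113
  rw [s1, s3] at r322
  rw [s1, s2, s3] at r33
  simp [Matrix.det_succ_row_zero, Fin.sum_univ_succ, Fin.succAbove, trd, -QuaternionAlgebra.re_mul,
    r11, r22, hcomm, f131, f232, r113, r322, r33, s1, s2, s3]
  ring

/-- Let `B = ℍ[ℚ, a, b]` be a quaternion algebra over `ℚ`, `D1, D2` discriminants, and
`w1, w2 ∈ B` with `wᵢ ∉ ℚ·1` and `wᵢ² = Dᵢ·1`. Assume `x := ½·trd(w1·w2)` is an integer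
(i.e. `w1·w2 + w2·w1 = 2x·1` with `x ∈ ℤ`) with `x ≡ D1·D2 (mod 2)` and `x² ≠ D1·D2`. Set
`vᵢ = (p_{Dᵢ}·1 + wᵢ)/2`. Then the `ℤ`-submodule `O` of `B` spanned by `{1, v1, v2, v1·v2}`
is an order of `B`, free of rank 4 with basis `(1, v1, v2, v1·v2)`; it is the smallest order
of `B` containing `v1` and `v2`; the determinant `det(trd(α_r·α_s))` computed on this basis
equals `−(D1·D2 − x²)²/16`; and hence `discrd(O) = |D1·D2 − x²|/4`. -/
theorem stmt14 (a b : ℚ) (ha : a ≠ 0) (hb : b ≠ 0)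
    (D1 D2 x : ℤ)
    (hD1 : D1 % 4 = 0 ∨ D1 % 4 = 1) (hD2 : D2 % 4 = 0 ∨ D2 % 4 = 1)
    (w1 w2 : ℍ[ℚ, a, b])
    (hw1ns : w1 ∉ Set.range (algebraMap ℚ ℍ[ℚ, a, b]))
    (hw2ns : w2 ∉ Set.range (algebraMap ℚ ℍ[ℚ, a, b]))
    (hw1sq : w1 ^ 2 = algebraMap ℚ ℍ[ℚ, a, b] ((D1 : ℤ) : ℚ))
    (hw2sq : w2 ^ 2 = algebraMap ℚ ℍ[ℚ, a, b] ((D2 : ℤ) : ℚ))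
    (hlink : w1 * w2 + w2 * w1 = algebraMap ℚ ℍ[ℚ, a, b] ((2 * x : ℤ) : ℚ))
    (hxpar : x % 2 = (D1 * D2) % 2) (hxsq : x ^ 2 ≠ D1 * D2)
    (v1 v2 : ℍ[ℚ, a, b])
    (hv1 : v1 = (2 : ℚ)⁻¹ • (algebraMap ℚ ℍ[ℚ, a, b] ((D1 % 2 : ℤ) : ℚ) + w1))
    (hv2 : v2 = (2 : ℚ)⁻¹ • (algebraMap ℚ ℍ[ℚ, a, b] ((D2 % 2 : ℤ) : ℚ) + w2)) :
    ∃ O : Subring ℍ[ℚ, a, b],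
      (O : Set ℍ[ℚ, a, b]) =
        (Submodule.span ℤ ({1, v1, v2, v1 * v2} : Set ℍ[ℚ, a, b]) : Set ℍ[ℚ, a, b]) ∧
      IsOrder O ∧
      LinearIndependent ℤ ![(1 : ℍ[ℚ, a, b]), v1, v2, v1 * v2] ∧
      (∀ O' : Subring ℍ[ℚ, a, b], IsOrder O' → v1 ∈ O' → v2 ∈ O' → O ≤ O') ∧
      Matrix.det (Matrix.of fun r s : Fin 4 =>
          trd (![(1 : ℍ[ℚ, a, b]), v1, v2, v1 * v2] r *
            ![(1 : ℍ[ℚ, a, b]), v1, v2, v1 * v2] s)) =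
        - (((D1 * D2 - x ^ 2 : ℤ) : ℚ)) ^ 2 / 16 ∧
      (∀ d : ℤ, 0 < d →
        ((d : ℚ)) ^ 2 =
          - Matrix.det (Matrix.of fun r s : Fin 4 =>
              trd (![(1 : ℍ[ℚ, a, b]), v1, v2, v1 * v2] r *
                ![(1 : ℍ[ℚ, a, b]), v1, v2, v1 * v2] s)) →
        d = |D1 * D2 - x ^ 2| / 4) := by
  have w1re := re_eq_zero_of_sq w1 _ hw1ns hw1sq
  have w2re := re_eq_zero_of_sq w2 _ hw2ns hw2sq
  obtain ⟨p1, hp1⟩ : ∃ p, p = D1 % 2 := ⟨_, rfl⟩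
  obtain ⟨p2, hp2⟩ : ∃ p, p = D2 % 2 := ⟨_, rfl⟩
  rw [← hp1] at hv1
  rw [← hp2] at hv2
  have pp1 : p1 * p1 = p1 := by
    rcases (show p1 = 0 ∨ p1 = 1 by omega) with h | h <;> simp [h]
  have pp2 : p2 * p2 = p2 := by
    rcases (show p2 = 0 ∨ p2 = 1 by omega) with h | h <;> simp [h]
  obtain ⟨c1, hc1⟩ : ∃ c, D1 = p1 + 4 * c := ⟨(D1 - p1) / 4, by omega⟩
  obtain ⟨c2, hc2⟩ : ∃ c, D2 = p2 + 4 * c := ⟨(D2 - p2) / 4, by omega⟩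
  obtain ⟨n, hn⟩ : ∃ n, x = 2 * n + p1 * p2 := by
    have : x % 2 = (p1 * p2) % 2 := by rw [hxpar, hp1, hp2, ← Int.mul_emod]
    exact ⟨(x - p1 * p2) / 2, by omega⟩
  have W1 : w1 = (2 : ℚ) • v1 - algebraMap ℚ _ (p1 : ℚ) := by
    rw [hv1, smul_smul]; norm_num
  have W2 : w2 = (2 : ℚ) • v2 - algebraMap ℚ _ (p2 : ℚ) := by
    rw [hv2, smul_smul]; norm_num
  have qp1 : (p1 : ℚ) * p1 = p1 := by exact_mod_cast pp1
  have qp2 : (p2 : ℚ) * p2 = p2 := by exact_mod_cast pp2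
  have t1 : 2 * v1.re = p1 := by
    rw [hv1]; simp [w1re]
  have t2 : 2 * v2.re = p2 := by
    rw [hv2]; simp [w2re]
  have h1 : v1 * v1 = p1 • v1 + c1 • 1 := by
    rw [W1, hc1, sq] at hw1sq
    simp only [Algebra.algebraMap_eq_smul_one, mul_sub, sub_mul, smul_mul_assoc, mul_smul_comm,
      mul_one, one_mul, smul_sub, smul_smul, qp1] at hw1sq
    push_cast at hw1sq
    rw [← Int.cast_smul_eq_zsmul ℚ, ← Int.cast_smul_eq_zsmul ℚ]
    linear_combination (norm := module) (1 / 4 : ℚ) • hw1sq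
  have h2 : v2 * v2 = p2 • v2 + c2 • 1 := by
    rw [W2, hc2, sq] at hw2sq
    simp only [Algebra.algebraMap_eq_smul_one, mul_sub, sub_mul, smul_mul_assoc, mul_smul_comm,
      mul_one, one_mul, smul_sub, smul_smul, qp2] at hw2sq
    push_cast at hw2sq
    rw [← Int.cast_smul_eq_zsmul ℚ, ← Int.cast_smul_eq_zsmul ℚ]
    linear_combination (norm := module) (1 / 4 : ℚ) • hw2sq
  have h21 : v2 * v1 = -(v1 * v2) + p2 • v1 + p1 • v2 + n • 1 := by
    rw [W1, W2, hn] at hlink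
    simp only [Algebra.algebraMap_eq_smul_one, mul_sub, sub_mul, smul_mul_assoc, mul_smul_comm,
      mul_one, one_mul] at hlink
    push_cast at hlink
    rw [← Int.cast_smul_eq_zsmul ℚ, ← Int.cast_smul_eq_zsmul ℚ, ← Int.cast_smul_eq_zsmul ℚ]
    linear_combination (norm := module) (1 / 4 : ℚ) • hlink
  have hset := closure_eq_span v1 v2 p1 p2 c1 c2 n h1 h2 h21
  have hdet : Matrix.det (Matrix.of fun r s : Fin 4 =>
          trd (![(1 : ℍ[ℚ, a, b]), v1, v2, v1 * v2] r *
            ![(1 : ℍ[ℚ, a, b]), v1, v2, v1 * v2] s)) =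
        - (((D1 * D2 - x ^ 2 : ℤ) : ℚ)) ^ 2 / 16 := by
    rw [gram_det v1 v2 p1 p2 c1 c2 n h1 h2 h21 t1 t2, hc1, hc2, hn]
    push_cast
    rw [sq (p1 : ℚ), sq (p2 : ℚ), qp1, qp2]
  have hN : D1 * D2 - x ^ 2 ≠ 0 := fun h => hxsq (by linarith)
  have hli : LinearIndependent ℚ ![(1 : ℍ[ℚ, a, b]), v1, v2, v1 * v2] := by
    apply linearIndependent_of_gram
    rw [hdet]
    have : ((D1 * D2 - x ^ 2 : ℤ) : ℚ) ≠ 0 := by exact_mod_cast hN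
    exact div_ne_zero (neg_ne_zero.mpr (pow_ne_zero 2 this)) (by norm_num)
  refine ⟨Subring.closure {v1, v2}, hset, ⟨?_, ?_⟩, hli.restrict_scalars' ℤ, ?_, hdet, ?_⟩
  · have : AddSubgroup.toIntSubmodule (Subring.closure {v1, v2}).toAddSubgroup =
        Submodule.span ℤ ({1, v1, v2, v1 * v2} : Set ℍ[ℚ, a, b]) :=
      SetLike.coe_injective hset
    rw [this]
    exact Submodule.fg_span (Set.toFinite _)
  · have htop := hli.span_eq_top_of_card_eq_finrank'
      (by rw [QuaternionAlgebra.finrank_eq_four]; simp)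
    rw [eq_top_iff, ← htop]
    apply Submodule.span_mono
    rw [hset]
    rintro _ ⟨i, rfl⟩
    apply Submodule.subset_span
    fin_cases i <;> simp
  · intro O' _ g1 g2
    rw [Subring.closure_le]
    rintro _ (rfl | rfl)
    · exact g1
    · exact g2
  · intro d hd hd2
    rw [hdet] at hd2
    have h16 : (4 * d) ^ 2 = (D1 * D2 - x ^ 2) ^ 2 := by
      have : ((4 * d : ℤ) : ℚ) ^ 2 = ((D1 * D2 - x ^ 2 : ℤ) : ℚ) ^ 2 := by
        push_cast at hd2 ⊢; linarith
      exact_mod_cast this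
    have habs := (sq_eq_sq_iff_abs_eq_abs _ _).mp h16
    rw [abs_of_pos (by linarith : 0 < 4 * d)] at habs
    omega
end

section
/- Let B be a quaternion algebra over F, where F = ℚ (with ring of integers 𝒪_F = ℤ) or F = ℚ_p (with 𝒪_F = ℤ_p). Let v1, v2, v3 ∈ B be such that for each pair (i,j) ∈ {(1,2), (1,3), (2,3)} the 𝒪_F-submodule of B spanned by {1, v_i, v_j, v_i·v_j} is an order of B. Then the 𝒪_F-submodule of B spanned by {1, v1, v2, v3, v1·v2, v1·v3, v2·v3, v1·v2·v3} is an order of B. -/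
/-!
Work over the image `A = f.range` of the ring of integers in `F`, and let `Oᵢ = A + A vᵢ`, an
`A`-submodule of `B`.  Products of submodules satisfy `O₁ O₂ O₃ = ` the span of the eight given
elements and, for `i < j`, `Oᵢ Oⱼ = ` the span of `1, vᵢ, vⱼ, vᵢ vⱼ`.  Since the latter is a ring
containing `Oᵢ` and `Oⱼ`, we have `Oⱼ Oᵢ ≤ Oᵢ Oⱼ`.  If moreover `Oᵢ Oᵢ ≤ Oᵢ`, then
`(O₁ O₂ O₃)(O₁ O₂ O₃) ≤ O₁ O₁ O₂ O₂ O₃ O₃ ≤ O₁ O₂ O₃`, so the span is a ring; it spans `B` over `F`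
because it contains `O₁ O₂`.

The inclusion `Oᵢ Oᵢ ≤ Oᵢ` means `vᵢ² ∈ A + A vᵢ` (`sq_mem_pair`, `sq_mem_pair'`).  In a quaternion
algebra `v² = t v - n` with `t, n ∈ F` (`exists_quadratic`).  The four elements `1, x, y, xy` span
the four-dimensional space `B`, hence are linearly independent, and comparing the coefficients of
`t v - n` with those of `v²` as an element of the order shows `t, n ∈ A`.  No property of the ring
of integers is needed, so both cases follow from `spanIsOrder_eight`.
-/

open Quaternion

/-- The `𝒪_F`-submodule of `B` spanned by the entries of a list `l`, where the ring of
integers `𝒪_F = R` is given via a ring homomorphism `f : R →+* F`. -/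
def RSpan {F B R : Type*} [Field F] [Ring B] [Algebra F B] [CommRing R]
    (f : R →+* F) (l : List B) : Set B :=
  {z : B | ∃ c : Fin l.length → R, z = ∑ i, f (c i) • l.get i}

/-- An order of a quaternion algebra `B` over `F` relative to the ring of integers
`f : R →+* F`: a unital subring of `B` that is finitely generated as an `R`-module and
contains a basis of `B` over `F` (equivalently, spans `B` over `F`). -/
def IsROrder {F B R : Type*} [Field F] [Ring B] [Algebra F B] [CommRing R]
    (f : R →+* F) (O : Subring B) : Prop :=
  (∃ l : List B, (∀ y ∈ l, y ∈ O) ∧ ∀ z ∈ O, z ∈ RSpan f l) ∧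
    Submodule.span F (O : Set B) = ⊤

/-- The `𝒪_F`-span of the list `l` is an order of `B`. -/
def SpanIsOrder {F B R : Type*} [Field F] [Ring B] [Algebra F B] [CommRing R]
    (f : R →+* F) (l : List B) : Prop :=
  ∃ O : Subring B, (O : Set B) = RSpan f l ∧ IsROrder f O

section Aux

variable {F B R : Type*} [Field F] [Ring B] [Algebra F B] [CommRing R]

/-- The span over `R` along `f` is the span over the subring `f.range` of `F`. -/
lemma rSpan_eq_span (f : R →+* F) (l : List B) :
    RSpan f l = (Submodule.span f.range {x | x ∈ l} : Set B) := by
  have hl : {x | x ∈ l} = Set.range l.get := by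
    ext x
    simp [List.mem_iff_get]
  ext z
  rw [hl, SetLike.mem_coe, Submodule.mem_span_range_iff_exists_fun]
  constructor
  · rintro ⟨c, rfl⟩
    exact ⟨fun i => ⟨f (c i), c i, rfl⟩, rfl⟩
  · rintro ⟨c, rfl⟩
    choose d hd using fun i => (c i).2
    refine ⟨d, Finset.sum_congr rfl fun i _ => ?_⟩
    rw [hd]
    rfl

/-- The trace and norm equation of an element of a quaternion algebra. -/
lemma exists_quadratic (h : IsQuaternionAlgebra F B) (x : B) :
    ∃ t n : F, x * x = t • x + n • (1 : B) := by
  obtain ⟨a, b, -, -, ⟨e⟩⟩ := h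
  refine ⟨2 * (e x).re, -((e x).re ^ 2 - a * (e x).imI ^ 2 - b * (e x).imJ ^ 2
    + a * b * (e x).imK ^ 2), e.injective ?_⟩
  rw [map_mul, map_add, map_smul, map_smul, map_one]
  ext <;> simp <;> ring

lemma finrank_eq_four (h : IsQuaternionAlgebra F B) : Module.finrank F B = 4 := by
  obtain ⟨a, b, -, -, ⟨e⟩⟩ := h
  rw [e.toLinearEquiv.finrank_eq, QuaternionAlgebra.finrank_eq_four]

/-- Four elements whose `R`-span is an order are linearly independent over `F`. -/
lemma linearIndependent_of_spanIsOrder (h : IsQuaternionAlgebra F B) (f : R →+* F) (x y : B)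
    (ho : SpanIsOrder f [1, x, y, x * y]) : LinearIndependent F ![1, x, y, x * y] := by
  obtain ⟨O, hO, -, htop⟩ := ho
  refine linearIndependent_of_top_le_span_of_card_eq_finrank ?_ (by simp [finrank_eq_four h])
  rw [← htop, Submodule.span_le, hO]
  rintro z ⟨c, rfl⟩
  refine Submodule.sum_mem _ fun i _ => Submodule.smul_mem _ _ (Submodule.subset_span ⟨i, ?_⟩)
  fin_cases i <;> rfl

/-- The coordinates, all in the image of `R`, of an element of an order `⟨1, x, y, xy⟩`. -/
lemma exists_coords (f : R →+* F) {x y z : B} (hz : z ∈ RSpan f [1, x, y, x * y]) :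
    ∃ c : Fin 4 → R, z = f (c 0) • (1 : B) + f (c 1) • x + f (c 2) • y + f (c 3) • (x * y) := by
  obtain ⟨c, rfl⟩ := hz
  exact ⟨c, Fin.sum_univ_four (fun i : Fin 4 => f (c i) • [1, x, y, x * y].get i)⟩

/-- Write `x² = t x + n` with `t, n ∈ F`.  As `x²` lies in the order and `1, x, y, xy` are
independent over `F`, the coefficients `t` and `n` lie in the image of `R`. -/
lemma sq_mem_pair (h : IsQuaternionAlgebra F B) (f : R →+* F) (x y : B)
    (ho : SpanIsOrder f [1, x, y, x * y]) : x * x ∈ Submodule.span f.range {1, x} := by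
  have hli := linearIndependent_of_spanIsOrder h f x y ho
  obtain ⟨O, hO, -⟩ := ho
  have hx : x ∈ O := by
    rw [← SetLike.mem_coe, hO, rSpan_eq_span]
    exact Submodule.subset_span (by simp)
  have hxx : x * x ∈ RSpan f [1, x, y, x * y] := hO ▸ O.mul_mem hx hx
  obtain ⟨c, hc⟩ := exists_coords f hxx
  obtain ⟨t, n, ht⟩ := exists_quadratic h x
  have key := Fintype.linearIndependent_iff.1 hli
    ![f (c 0) - n, f (c 1) - t, f (c 2), f (c 3)] (by
      have := hc.symm.trans ht
      simp only [Fin.sum_univ_four, Matrix.cons_val, sub_smul]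
      rw [← sub_eq_zero] at this
      rw [← this]
      abel)
  have h0 : f (c 0) = n := sub_eq_zero.1 (key 0)
  have h1 : f (c 1) = t := sub_eq_zero.1 (key 1)
  rw [Submodule.mem_span_pair]
  refine ⟨⟨f (c 0), c 0, rfl⟩, ⟨f (c 1), c 1, rfl⟩, ?_⟩
  rw [ht, ← h0, ← h1, add_comm]
  rfl

/-- The analogue of `sq_mem_pair` for the second generator of the order. -/
lemma sq_mem_pair' (h : IsQuaternionAlgebra F B) (f : R →+* F) (x y : B)
    (ho : SpanIsOrder f [1, x, y, x * y]) : y * y ∈ Submodule.span f.range {1, y} := by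
  have hli := linearIndependent_of_spanIsOrder h f x y ho
  obtain ⟨O, hO, -⟩ := ho
  have hy : y ∈ O := by
    rw [← SetLike.mem_coe, hO, rSpan_eq_span]
    exact Submodule.subset_span (by simp)
  have hyy : y * y ∈ RSpan f [1, x, y, x * y] := hO ▸ O.mul_mem hy hy
  obtain ⟨c, hc⟩ := exists_coords f hyy
  obtain ⟨t, n, ht⟩ := exists_quadratic h y
  have key := Fintype.linearIndependent_iff.1 hli
    ![f (c 0) - n, f (c 1), f (c 2) - t, f (c 3)] (by
      have := hc.symm.trans ht
      simp only [Fin.sum_univ_four, Matrix.cons_val, sub_smul]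
      rw [← sub_eq_zero] at this
      rw [← this]
      abel)
  have h0 : f (c 0) = n := sub_eq_zero.1 (key 0)
  have h2 : f (c 2) = t := sub_eq_zero.1 (key 2)
  rw [Submodule.mem_span_pair]
  refine ⟨⟨f (c 0), c 0, rfl⟩, ⟨f (c 2), c 2, rfl⟩, ?_⟩
  rw [ht, ← h0, ← h2, add_comm]
  rfl

lemma pair_mul_self_le {A : Type*} [CommRing A] [Algebra A B] {x : B}
    (h : x * x ∈ Submodule.span A {1, x}) :
    Submodule.span A {1, x} * Submodule.span A {1, x} ≤ Submodule.span A {1, x} := by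
  rw [Submodule.span_mul_span, Submodule.span_le]
  rintro _ ⟨a, ha, b, hb, rfl⟩
  have h1 : (1 : B) ∈ Submodule.span A {1, x} := Submodule.subset_span (by simp)
  have hx : x ∈ Submodule.span A {1, x} := Submodule.subset_span (by simp)
  rcases ha with rfl | rfl <;> rcases hb with rfl | rfl <;> simpa

lemma span_four_eq {A : Type*} [CommRing A] [Algebra A B] (x y : B) :
    Submodule.span A {z | z ∈ [1, x, y, x * y]} =
      Submodule.span A {1, x} * Submodule.span A {1, y} := by
  rw [Submodule.span_mul_span]
  congr 1
  ext z
  simp only [Set.mem_mul, List.mem_cons, List.not_mem_nil, Set.mem_insert_iff,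
    Set.mem_singleton_iff, Set.mem_ofPred_eq, exists_eq_or_imp, exists_eq_left, one_mul, mul_one,
    or_false, eq_comm (b := z)]
  tauto

lemma span_eight_eq {A : Type*} [CommRing A] [Algebra A B] (x y w : B) :
    Submodule.span A {z | z ∈ [1, x, y, w, x * y, x * w, y * w, x * y * w]} =
      Submodule.span A {1, x} * Submodule.span A {1, y} * Submodule.span A {1, w} := by
  rw [Submodule.span_mul_span, Submodule.span_mul_span]
  congr 1
  ext z
  simp only [Set.mem_mul, List.mem_cons, List.not_mem_nil, Set.mem_insert_iff,
    Set.mem_singleton_iff, Set.mem_ofPred_eq, exists_eq_left, one_mul, mul_one,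
    or_false, or_and_right, exists_or, eq_comm (b := z)]
  grind

/-- Since `Oₓ O_y` is a ring, it contains the product of its factors in the other order. -/
lemma pair_mul_swap_le (f : R →+* F) (x y : B) (ho : SpanIsOrder f [1, x, y, x * y]) :
    Submodule.span f.range {1, y} * Submodule.span f.range {1, x} ≤
      Submodule.span f.range {1, x} * Submodule.span f.range {1, y} := by
  obtain ⟨O, hO, -⟩ := ho
  rw [rSpan_eq_span] at hO
  have hmem : ∀ z ∈ [1, x, y, x * y], z ∈ O := fun z hz => by
    rw [← SetLike.mem_coe, hO]
    exact Submodule.subset_span hz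
  have hx : x ∈ O := hmem x (by simp)
  have hy : y ∈ O := hmem y (by simp)
  rw [Submodule.span_mul_span, ← span_four_eq, Submodule.span_le, ← hO]
  rintro _ ⟨a, ha, b, hb, rfl⟩
  refine O.mul_mem ?_ ?_
  · rcases ha with rfl | rfl
    exacts [O.one_mem, hy]
  · rcases hb with rfl | rfl
    exacts [O.one_mem, hx]

/-- The theorem for an arbitrary ring homomorphism `f : R →+* F` to a field. -/
lemma spanIsOrder_eight (h : IsQuaternionAlgebra F B) (f : R →+* F) (v1 v2 v3 : B)
    (h12 : SpanIsOrder f [1, v1, v2, v1 * v2]) (h13 : SpanIsOrder f [1, v1, v3, v1 * v3])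
    (h23 : SpanIsOrder f [1, v2, v3, v2 * v3]) :
    SpanIsOrder f [1, v1, v2, v3, v1 * v2, v1 * v3, v2 * v3, v1 * v2 * v3] := by
  have s1 := pair_mul_self_le (sq_mem_pair h f v1 v2 h12)
  have s2 := pair_mul_self_le (sq_mem_pair' h f v1 v2 h12)
  have s3 := pair_mul_self_le (sq_mem_pair' h f v1 v3 h13)
  have c12 := pair_mul_swap_le f v1 v2 h12
  have c13 := pair_mul_swap_le f v1 v3 h13
  have c23 := pair_mul_swap_le f v2 v3 h23
  have e8 := span_eight_eq (A := f.range) v1 v2 v3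
  set P := Submodule.span f.range {1, v1}
  set Q := Submodule.span f.range {1, v2}
  set T := Submodule.span f.range {1, v3}
  have hmul : P * Q * T * (P * Q * T) ≤ P * Q * T := calc
    P * Q * T * (P * Q * T) = P * Q * (T * P) * (Q * T) := by simp only [mul_assoc]
    _ ≤ P * Q * (P * T) * (Q * T) := by gcongr
    _ = P * (Q * P) * (T * Q) * T := by simp only [mul_assoc]
    _ ≤ P * (P * Q) * (Q * T) * T := by gcongr
    _ = (P * P) * (Q * Q) * (T * T) := by simp only [mul_assoc]
    _ ≤ P * Q * T := by gcongr
  have hset := rSpan_eq_span f [1, v1, v2, v3, v1 * v2, v1 * v3, v2 * v3, v1 * v2 * v3]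
  rw [e8] at hset
  have hgen : ∀ z ∈ [1, v1, v2, v3, v1 * v2, v1 * v3, v2 * v3, v1 * v2 * v3], z ∈ P * Q * T :=
    fun z hz => e8 ▸ Submodule.subset_span hz
  let O : Subring B :=
    { carrier := P * Q * T
      mul_mem' := fun ha hb => hmul (Submodule.mul_mem_mul ha hb)
      one_mem' := hgen 1 (by simp)
      add_mem' := fun ha hb => add_mem ha hb
      zero_mem' := zero_mem _
      neg_mem' := fun ha => neg_mem ha }
  refine ⟨O, hset.symm, ⟨_, hgen, fun z hz => hset ▸ hz⟩, ?_⟩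
  obtain ⟨O', hO', -, htop⟩ := h12
  rw [eq_top_iff, ← htop]
  refine Submodule.span_mono ?_
  rw [hO', rSpan_eq_span]
  change _ ≤ P * Q * T
  rw [Submodule.span_le]
  intro z hz
  refine hgen z ?_
  simp only [Set.mem_ofPred_eq, List.mem_cons, List.not_mem_nil, or_false] at hz ⊢
  tauto

end Aux

/-- Let `B` be a quaternion algebra over `F`, where `F = ℚ` (with `𝒪_F = ℤ`) or `F = ℚ_p`
(with `𝒪_F = ℤ_p`). Let `v1, v2, v3 ∈ B` be such that for each pair
`(i,j) ∈ {(1,2), (1,3), (2,3)}` the `𝒪_F`-submodule of `B` spanned by `{1, vᵢ, vⱼ, vᵢ·vⱼ}`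
is an order of `B`. Then the `𝒪_F`-submodule of `B` spanned by
`{1, v1, v2, v3, v1·v2, v1·v3, v2·v3, v1·v2·v3}` is an order of `B`. -/
theorem stmt15 :
    (∀ (B : Type*) [Ring B] [Algebra ℚ B], IsQuaternionAlgebra ℚ B →
      ∀ v1 v2 v3 : B,
        SpanIsOrder (Int.castRingHom ℚ) [1, v1, v2, v1 * v2] →
        SpanIsOrder (Int.castRingHom ℚ) [1, v1, v3, v1 * v3] →
        SpanIsOrder (Int.castRingHom ℚ) [1, v2, v3, v2 * v3] →
        SpanIsOrder (Int.castRingHom ℚ)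
          [1, v1, v2, v3, v1 * v2, v1 * v3, v2 * v3, v1 * v2 * v3]) ∧
    (∀ (p : ℕ) (_ : Fact p.Prime) (B : Type*) [Ring B] [Algebra ℚ_[p] B],
      IsQuaternionAlgebra ℚ_[p] B →
      ∀ v1 v2 v3 : B,
        SpanIsOrder (PadicInt.Coe.ringHom (p := p)) [1, v1, v2, v1 * v2] →
        SpanIsOrder (PadicInt.Coe.ringHom (p := p)) [1, v1, v3, v1 * v3] →
        SpanIsOrder (PadicInt.Coe.ringHom (p := p)) [1, v2, v3, v2 * v3] →
        SpanIsOrder (PadicInt.Coe.ringHom (p := p))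
          [1, v1, v2, v3, v1 * v2, v1 * v3, v2 * v3, v1 * v2 * v3]) := by
  exact ⟨fun B _ _ h => spanIsOrder_eight h _, fun p _ B _ _ h => spanIsOrder_eight h _⟩
end
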